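/- arXiv:1805.11855 — 2 statements merged into one kernel-verified Lean document; each statement's English description precedes it below -/
import Mathlib

section
/- Let α > −1, γ > −1 and β < α + 1 be real numbers, and suppose ∫₀ˣ (x² − t²)^γ t^{−β} J_α(t) dt ≥ 0 for every x > 0. Then necessarily β ≥ −(γ + 1/2) and −α − 1 < β < α + 1. -/
open Real

/-- The Bessel function of the first kind of real order `α`. -/
noncomputable def besselJ (α : ℝ) (t : ℝ) : ℝ :=
  ∑' k : ℕ, (-1 : ℝ) ^ k / ((k.factorial : ℝ) * Real.Gamma (α + k + 1)) *
    (t / 2) ^ (2 * (k : ℝ) + α)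

open MeasureTheory Set Filter Topology

lemma aux_beta {p q : ℝ} (hp : 0 < p) (hq : 0 < q) :
    IntegrableOn (fun t : ℝ => t ^ (p - 1) * (1 - t) ^ (q - 1)) (Ioo 0 1) ∧
    ∫ t in Ioo (0:ℝ) 1, t ^ (p - 1) * (1 - t) ^ (q - 1) = Gamma p * Gamma q / Gamma (p + q) := by
  have hB := ProbabilityTheory.beta_pos hp hq
  have h1 := ProbabilityTheory.lintegral_betaPDF_eq_one hp hq
  rw [ProbabilityTheory.lintegral_betaPDF] at h1
  have hnn : ∀ t ∈ Ioo (0:ℝ) 1, 0 ≤ 1 / ProbabilityTheory.beta p q * t ^ (p - 1) * (1 - t) ^ (q - 1) := by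
    intro t ht
    have := rpow_nonneg ht.1.le (p-1)
    have := rpow_nonneg (sub_pos.2 ht.2).le (q-1)
    positivity
  have hmeas : AEStronglyMeasurable (fun t : ℝ => 1 / ProbabilityTheory.beta p q * t ^ (p - 1) * (1 - t) ^ (q - 1)) (volume.restrict (Ioo 0 1)) := by
    apply Measurable.aestronglyMeasurable
    fun_prop
  have hi : IntegrableOn (fun t : ℝ => 1 / ProbabilityTheory.beta p q * t ^ (p - 1) * (1 - t) ^ (q - 1)) (Ioo 0 1) := by
    refine ⟨hmeas, ?_⟩
    rw [hasFiniteIntegral_iff_ofReal, h1]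
    · simp
    · exact (ae_restrict_iff' measurableSet_Ioo).2 (Eventually.of_forall hnn)
  have hv : ∫ t in Ioo (0:ℝ) 1, 1 / ProbabilityTheory.beta p q * t ^ (p - 1) * (1 - t) ^ (q - 1) = 1 := by
    rw [integral_eq_lintegral_of_nonneg_ae _ hmeas, h1]
    · simp
    · exact (ae_restrict_iff' measurableSet_Ioo).2 (Eventually.of_forall hnn)
  have e : (fun t : ℝ => t ^ (p - 1) * (1 - t) ^ (q - 1)) = fun t => ProbabilityTheory.beta p q * (1 / ProbabilityTheory.beta p q * t ^ (p - 1) * (1 - t) ^ (q - 1)) := by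
    ext t; field_simp
  constructor
  · rw [e]; exact hi.const_mul _
  · rw [e, integral_const_mul, hv, mul_one]; rfl

lemma aux_beta_sq {p q x : ℝ} (hp : 0 < p) (hq : 0 < q) (hx : 0 < x) :
    IntegrableOn (fun t : ℝ => t ^ (2 * p - 1) * (x ^ 2 - t ^ 2) ^ (q - 1)) (Ioo 0 x) ∧
    ∫ t in Ioo (0:ℝ) x, t ^ (2 * p - 1) * (x ^ 2 - t ^ 2) ^ (q - 1) =
      x ^ (2 * p + 2 * q - 2) / 2 * (Gamma p * Gamma q / Gamma (p + q)) := by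
  have him : (fun t : ℝ => (t / x) ^ 2) '' Ioo 0 x = Ioo 0 1 := by
    ext v
    constructor
    · rintro ⟨t, ht, rfl⟩
      have h0 : 0 < t / x := div_pos ht.1 hx
      have h1 : t / x < 1 := (div_lt_one hx).2 ht.2
      exact ⟨by positivity, by simpa using pow_lt_one₀ h0.le h1 two_ne_zero⟩
    · rintro ⟨h0, h1⟩
      refine ⟨x * √v, ⟨by positivity, ?_⟩, ?_⟩
      · have : √v < 1 := by rw [Real.sqrt_lt' one_pos]; simpa using h1
        nlinarith
      · simp only []
        rw [mul_div_cancel_left₀ _ hx.ne', Real.sq_sqrt h0.le]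
  have hinj : InjOn (fun t : ℝ => (t / x) ^ 2) (Ioo 0 x) := by
    intro s hs t ht h
    have h0 : 0 < t / x := div_pos ht.1 hx
    have h1 : 0 < s / x := div_pos hs.1 hx
    have := (pow_left_inj₀ h1.le h0.le two_ne_zero).1 h
    field_simp at this
    exact this
  have hd : ∀ t ∈ Ioo 0 x, HasDerivWithinAt (fun t : ℝ => (t / x) ^ 2) (2 * t / x ^ 2) (Ioo 0 x) t := by
    intro t ht
    apply HasDerivAt.hasDerivWithinAt
    have := ((hasDerivAt_id t).div_const x).pow 2
    convert! this using 1
    simp; field_simp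
  obtain ⟨hi, hv⟩ := aux_beta hp hq
  have e : ∀ t ∈ Ioo 0 x, |2 * t / x ^ 2| • (((t / x) ^ 2) ^ (p - 1) * (1 - (t / x) ^ 2) ^ (q - 1)) = 2 * x ^ (-(2 * p + 2 * q - 2)) * (t ^ (2 * p - 1) * (x ^ 2 - t ^ 2) ^ (q - 1)) := by
    intro t ht
    have ht0 := ht.1
    have h2 : 0 < x ^ 2 - t ^ 2 := by nlinarith [ht.2]
    rw [abs_of_pos (by positivity)]
    have e1 : ((t / x) ^ 2) ^ (p - 1) = t ^ (2 * p - 2) * x ^ (-(2 * p - 2)) := by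
      rw [← rpow_natCast, ← rpow_mul (by positivity), div_rpow ht0.le hx.le, rpow_neg hx.le, div_eq_mul_inv]
      push_cast; ring_nf
    have e2 : (1 - (t / x) ^ 2) ^ (q - 1) = (x ^ 2 - t ^ 2) ^ (q - 1) * x ^ (-(2 * q - 2)) := by
      rw [show 1 - (t / x) ^ 2 = (x ^ 2 - t ^ 2) / x ^ 2 by field_simp, div_rpow h2.le (by positivity), rpow_neg hx.le, div_eq_mul_inv, ← rpow_natCast x 2, ← rpow_mul hx.le]
      push_cast; ring_nf
    have e3 : t ^ (2 * p - 1) = t ^ (2 * p - 2) * t := by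
      rw [← rpow_add_one ht0.ne']; ring_nf
    have e4 : x ^ (-(2 * p + 2 * q - 2)) = x ^ (-(2 * p - 2)) * x ^ (-(2 * q - 2)) / x ^ 2 := by
      rw [← rpow_natCast x 2, ← rpow_add hx, ← rpow_sub hx]; push_cast; ring_nf
    rw [e1, e2, e3, e4, smul_eq_mul]
    ring
  have e5 : ∀ t : ℝ, t ^ (2 * p - 1) * (x ^ 2 - t ^ 2) ^ (q - 1) = x ^ (2 * p + 2 * q - 2) / 2 * (2 * x ^ (-(2 * p + 2 * q - 2)) * (t ^ (2 * p - 1) * (x ^ 2 - t ^ 2) ^ (q - 1))) := by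
    intro t
    have : x ^ (2 * p + 2 * q - 2) * x ^ (-(2 * p + 2 * q - 2)) = 1 := by
      rw [← rpow_add hx]; simp
    linear_combination -(t ^ (2 * p - 1) * (x ^ 2 - t ^ 2) ^ (q - 1)) * this
  rw [← him] at hi hv
  rw [integrableOn_image_iff_integrableOn_abs_deriv_smul measurableSet_Ioo hd hinj] at hi
  rw [integral_image_eq_integral_abs_deriv_smul measurableSet_Ioo hd hinj] at hv
  replace hi := hi.congr_fun e measurableSet_Ioo
  rw [setIntegral_congr_fun measurableSet_Ioo e] at hv
  rw [funext e5]
  refine ⟨hi.const_mul _, ?_⟩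
  rw [integral_const_mul, hv]

lemma aux_term {S : Set ℝ} (hS : MeasurableSet S) (φ g : ℝ → ℝ) (hφ : ∀ u ∈ S, 0 ≤ φ u)
    (hg : ∀ u ∈ S, 0 ≤ g u) (f M : ℕ → ℝ)
    (hi : ∀ k, IntegrableOn (fun u => φ u ^ k * g u) S) (hM : ∀ k, ∫ u in S, φ u ^ k * g u = M k)
    (hs : Summable fun k => |f k| * M k) :
    ((∀ u ∈ S, Summable fun k => f k * φ u ^ k) → IntegrableOn (fun u => (∑' k, f k * φ u ^ k) * g u) S) ∧
    HasSum (fun k => f k * M k) (∫ u in S, (∑' k, f k * φ u ^ k) * g u) := by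
  have hi' : ∀ k, Integrable (fun u => f k * (φ u ^ k * g u)) (volume.restrict S) := fun k => (hi k).const_mul _
  have hn : ∀ k, ∫ u in S, ‖f k * (φ u ^ k * g u)‖ = |f k| * M k := by
    intro k
    rw [← hM k, ← integral_const_mul]
    refine setIntegral_congr_fun hS fun u hu => ?_
    have := hφ u hu
    have := hg u hu
    simp only [norm_mul, Real.norm_eq_abs, abs_pow, abs_of_nonneg (hφ u hu), abs_of_nonneg (hg u hu)]
  have e : ∀ u, (∑' k, f k * φ u ^ k) * g u = ∑' k, f k * (φ u ^ k * g u) := by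
    intro u
    rw [← tsum_mul_right]
    simp_rw [mul_assoc]
  simp_rw [e]
  have hs' : Summable fun k => ∫ u in S, ‖f k * (φ u ^ k * g u)‖ := by simp_rw [hn]; exact hs
  constructor
  · intro hp
    constructor
    · refine aestronglyMeasurable_of_tendsto_ae atTop
        (f := fun n u => ∑ k ∈ Finset.range n, f k * (φ u ^ k * g u)) (fun n => ?_) ?_
      · exact Finset.aestronglyMeasurable_fun_sum _ fun k _ => (hi' k).1
      · refine (ae_restrict_iff' hS).2 (Eventually.of_forall fun u hu => ?_)
        have := ((hp u hu).mul_right (g u)).hasSum.tendsto_sum_nat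
        simp_rw [mul_assoc] at this
        exact this
    · refine lt_of_le_of_lt (lintegral_mono fun u => enorm_tsum_le_tsum_enorm) ?_
      rw [lintegral_tsum fun k => (hi' k).1.enorm]
      have : ∀ k, ∫⁻ u in S, ‖f k * (φ u ^ k * g u)‖ₑ = ENNReal.ofReal (|f k| * M k) := by
        intro k
        rw [← hn k, ofReal_integral_norm_eq_lintegral_enorm (hi' k)]
      simp_rw [this]
      exact hs.tsum_ofReal_lt_top
  · have := hasSum_integral_of_summable_integral_norm hi' hs'
    simp_rw [integral_const_mul, hM] at this
    exact this



noncomputable def auxA (a b c : ℝ) (k : ℕ) : ℝ :=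
  Gamma (a + k) / (k.factorial * Gamma (b + k) * Gamma (c + k))

noncomputable def auxPhi (a b c u : ℝ) : ℝ := ∑' k : ℕ, ((-1) ^ k * auxA a b c k) * u ^ k

lemma aux_Gpos {x : ℝ} (hx : 0 < x) (k : ℕ) : 0 < Gamma (x + k) := Gamma_pos_of_pos (by positivity)

lemma aux_Gsucc {x : ℝ} (hx : 0 < x) (k : ℕ) : Gamma (x + (k + 1 : ℕ)) = (x + k) * Gamma (x + k) := by
  push_cast
  rw [← add_assoc, Gamma_add_one (by positivity)]

lemma auxA_pos {a b c : ℝ} (ha : 0 < a) (hb : 0 < b) (hc : 0 < c) (k : ℕ) : 0 < auxA a b c k := by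
  have := aux_Gpos ha k
  have := aux_Gpos hb k
  have := aux_Gpos hc k
  unfold auxA; positivity

lemma auxA_succ {a b c : ℝ} (ha : 0 < a) (hb : 0 < b) (hc : 0 < c) (k : ℕ) :
    auxA a b c (k + 1) = (a + k) / ((k + 1) * (b + k) * (c + k)) * auxA a b c k := by
  have := aux_Gpos ha k
  have := aux_Gpos hb k
  have := aux_Gpos hc k
  unfold auxA
  rw [aux_Gsucc ha, aux_Gsucc hb, aux_Gsucc hc, Nat.factorial_succ]
  push_cast
  field_simp

lemma aux_ratio (x y : ℝ) : Tendsto (fun n : ℕ => (x + n) / (y + n)) atTop (𝓝 1) := by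
  have := tendsto_add_mul_div_add_mul_atTop_nhds x y (1:ℝ) (one_ne_zero (α := ℝ))
  simpa using this

lemma aux_sumS {a b c s Y : ℝ} (ha : 0 < a) (hb : 0 < b) (hc : 0 < c) (hs : 0 < s) (hY : 0 < Y) :
    Summable fun k => auxA a b c k * Gamma (s + k) * Y ^ k := by
  have hp : ∀ k : ℕ, 0 < auxA a b c k * Gamma (s + k) * Y ^ k := fun k => by
    have := aux_Gpos hs k
    have := auxA_pos ha hb hc k
    positivity
  refine summable_of_ratio_test_tendsto_lt_one zero_lt_one (Eventually.of_forall fun k => (hp k).ne') ?_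
  have h1 := ((aux_ratio a b).mul (aux_ratio s c)).mul
    ((tendsto_one_div_add_atTop_nhds_zero_nat (𝕜 := ℝ)).mul_const Y)
  simp only [zero_mul, mul_zero] at h1
  refine h1.congr fun k => ?_
  rw [Real.norm_of_nonneg (hp _).le, Real.norm_of_nonneg (hp _).le, auxA_succ ha hb hc, aux_Gsucc hs]
  have := aux_Gpos hs k
  have := auxA_pos ha hb hc k
  rw [eq_div_iff (hp k).ne']
  field_simp
  ring

lemma aux_sum0 {a b c Y : ℝ} (ha : 0 < a) (hb : 0 < b) (hc : 0 < c) (hY : 0 < Y) :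
    Summable fun k => auxA a b c k * Y ^ k := by
  refine (aux_sumS ha hb hc one_pos hY).of_nonneg_of_le (fun k => ?_) (fun k => ?_)
  · have := auxA_pos ha hb hc k
    positivity
  · have := auxA_pos ha hb hc k
    have h1 : 1 ≤ Gamma (1 + k) := by
      rw [add_comm, Gamma_nat_eq_factorial]
      exact_mod_cast Nat.succ_le_of_lt k.factorial_pos
    gcongr
    nlinarith

lemma aux_sumL {a b c s r : ℝ} (ha : 0 < a) (hb : 0 < b) (hc : 0 < c) (hs : 0 < s) (hr : 0 < r) (hr1 : r < 1) :
    Summable fun k : ℕ => auxA a b c k * Gamma (2 * (s + k)) / 4 ^ k * r ^ k := by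
  have hg : ∀ k : ℕ, 0 < Gamma (2 * (s + k)) := fun k => Gamma_pos_of_pos (by positivity)
  have hp : ∀ k : ℕ, 0 < auxA a b c k * Gamma (2 * (s + k)) / 4 ^ k * r ^ k := fun k => by
    have := hg k
    have := auxA_pos ha hb hc k
    positivity
  refine summable_of_ratio_test_tendsto_lt_one hr1 (Eventually.of_forall fun k => (hp k).ne') ?_
  have h1 := (((aux_ratio a b).mul (aux_ratio s c)).mul (aux_ratio (s+1/2) 1)).mul_const r
  simp only [one_mul] at h1
  refine h1.congr fun k => ?_
  have e : Gamma (2 * (s + (k + 1 : ℕ))) = (2 * (s + k) + 1) * (2 * (s + k)) * Gamma (2 * (s + k)) := by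
    rw [show (2 * (s + (k + 1 : ℕ)) : ℝ) = 2 * (s + k) + 1 + 1 by push_cast; ring, Gamma_add_one (by positivity),
      Gamma_add_one (by positivity)]
    ring
  rw [Real.norm_of_nonneg (hp _).le, Real.norm_of_nonneg (hp _).le, auxA_succ ha hb hc, e]
  have := hg k
  have := auxA_pos ha hb hc k
  rw [eq_div_iff (hp k).ne']
  field_simp
  ring

lemma aux_beta_mom {p q u : ℝ} (hp : 0 < p) (hq : 0 < q) (k : ℕ) :
    IntegrableOn (fun t : ℝ => (u * t) ^ k * (t ^ (p - 1) * (1 - t) ^ (q - 1))) (Ioo 0 1) ∧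
    ∫ t in Ioo (0:ℝ) 1, (u * t) ^ k * (t ^ (p - 1) * (1 - t) ^ (q - 1)) =
      u ^ k * (Gamma (p + k) * Gamma q / Gamma (p + q + k)) := by
  obtain ⟨h1, h2⟩ := aux_beta (p := p + k) (q := q) (by positivity) hq
  have e : EqOn (fun t : ℝ => u ^ k * (t ^ (p + k - 1) * (1 - t) ^ (q - 1)))
    (fun t : ℝ => (u * t) ^ k * (t ^ (p - 1) * (1 - t) ^ (q - 1))) (Ioo 0 1) := by
    intro t ht
    simp only
    rw [show p + k - 1 = p - 1 + k by ring, rpow_add_natCast ht.1.ne', mul_pow]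
    ring
  refine ⟨IntegrableOn.congr_fun (h1.const_mul _) e measurableSet_Ioo, ?_⟩
  rw [← setIntegral_congr_fun measurableSet_Ioo e, integral_const_mul, h2]
  ring_nf

lemma aux_gam_mom {s q : ℝ} (hs : 0 < s) (hq : 0 < q) (k : ℕ) :
    IntegrableOn (fun t : ℝ => t ^ k * (t ^ (s - 1) * exp (-q * t))) (Ioi 0) ∧
    ∫ t in Ioi (0:ℝ), t ^ k * (t ^ (s - 1) * exp (-q * t)) =
      q ^ (-s) * (1 / q) ^ k * Gamma (s + k) := by
  have hk : (-1:ℝ) < s + k - 1 := by have : (0:ℝ) ≤ k := by positivity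
                                     linarith
  have h1 := integrableOn_rpow_mul_exp_neg_mul_rpow hk one_pos hq
  have h2 := integral_rpow_mul_exp_neg_mul_rpow one_pos hk hq
  have e : EqOn (fun t : ℝ => t ^ (s + k - 1) * exp (-q * t ^ (1:ℝ)))
    (fun t : ℝ => t ^ k * (t ^ (s - 1) * exp (-q * t))) (Ioi 0) := by
    intro t ht
    simp only
    rw [show s + k - 1 = s - 1 + k by ring, rpow_add_natCast (ne_of_gt ht), rpow_one]
    ring
  refine ⟨h1.congr_fun e measurableSet_Ioi, ?_⟩
  rw [← setIntegral_congr_fun measurableSet_Ioi e, h2]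
  rw [show -(s + k - 1 + 1) / 1 = -s - k by ring, rpow_sub_natCast hq.ne', div_one]
  simp [div_eq_mul_inv]

lemma aux_part1 {a b c : ℝ} (ha : 0 < a) (hb : 0 < b) (hc : 0 < c) (hab : b ≤ a)
    (hpos : ∀ u, 0 < u → 0 ≤ auxPhi a b c u) : False := by
  have step1 : ∀ u, 0 < u → 0 ≤ ∑' k : ℕ, ((-1) ^ k * (1 / (k.factorial * Gamma (c + k)))) * u ^ k := by
    intro u hu
    rcases hab.eq_or_lt with rfl | hlt
    · convert! hpos u hu using 1
      unfold auxPhi auxA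
      congr 1; ext k
      have := aux_Gpos hb k
      have := aux_Gpos hc k
      field_simp
    · have h := (aux_term measurableSet_Ioo (fun t => u * t) (fun t => t ^ (b - 1) * (1 - t) ^ (a - b - 1))
        (S := Ioo 0 1) (fun t ht => mul_nonneg hu.le ht.1.le)
        (fun t ht => mul_nonneg (rpow_nonneg ht.1.le _) (rpow_nonneg (sub_nonneg.2 ht.2.le) _))
        (fun k => (-1) ^ k * auxA a b c k) _ (fun k => (aux_beta_mom hb (sub_pos.2 hlt) k).1)
        (fun k => (aux_beta_mom hb (sub_pos.2 hlt) k).2) ?_).2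
      · have e : (fun k : ℕ => (-1) ^ k * auxA a b c k * (u ^ k * (Gamma (b + k) * Gamma (a - b) / Gamma (b + (a - b) + k))))
            = fun k : ℕ => Gamma (a - b) * (((-1) ^ k * (1 / (k.factorial * Gamma (c + k)))) * u ^ k) := by
          ext k
          have := aux_Gpos ha k
          have := aux_Gpos hb k
          have := aux_Gpos hc k
          unfold auxA
          rw [show b + (a - b) + k = a + k by ring]
          field_simp
        rw [e] at h
        have h2 := h.tsum_eq
        rw [tsum_mul_left] at h2
        have hG := Gamma_pos_of_pos (sub_pos.2 hlt)
        have : 0 ≤ ∫ t in Ioo (0:ℝ) 1, (∑' k : ℕ, ((-1) ^ k * auxA a b c k) * (u * t) ^ k) * (t ^ (b - 1) * (1 - t) ^ (a - b - 1)) := by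
          refine setIntegral_nonneg measurableSet_Ioo fun t ht => ?_
          exact mul_nonneg (hpos _ (mul_pos hu ht.1)) (mul_nonneg (rpow_nonneg ht.1.le _) (rpow_nonneg (sub_nonneg.2 ht.2.le) _))
        rw [← h2] at this
        exact nonneg_of_mul_nonneg_right this hG
      · have := (aux_sumS ha hb hc hb hu)
        have h2 := ((aux_sum0 (a := 1) (b := 1) one_pos one_pos hc hu).mul_left (Gamma (a - b)))
        refine h2.congr fun k => ?_
        have := aux_Gpos ha k
        have := aux_Gpos hb k
        have := aux_Gpos hc k
        have := aux_Gpos one_pos k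
        rw [abs_mul, abs_pow, abs_neg, abs_one, one_pow, one_mul, abs_of_pos (auxA_pos ha hb hc k)]
        unfold auxA
        rw [show b + (a - b) + k = a + k by ring]
        field_simp
  have hq : 0 < 1 / (c + 1) := by positivity
  have h := (aux_term measurableSet_Ioi (fun t => t) (fun t => t ^ (c + 1 - 1) * exp (-(1 / (c + 1)) * t))
        (S := Ioi 0) (fun t ht => le_of_lt ht)
        (fun t ht => mul_nonneg (rpow_nonneg (le_of_lt ht) _) (exp_pos _).le)
        (fun k => (-1) ^ k * (1 / (k.factorial * Gamma (c + k)))) _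
        (fun k => (aux_gam_mom (by positivity) hq k).1)
        (fun k => (aux_gam_mom (by positivity) hq k).2) ?_).2
  · have hI : 0 ≤ ∫ t in Ioi (0:ℝ), (∑' k : ℕ, ((-1) ^ k * (1 / (k.factorial * Gamma (c + k)))) * t ^ k) * (t ^ (c + 1 - 1) * exp (-(1 / (c + 1)) * t)) := by
      refine setIntegral_nonneg measurableSet_Ioi fun t ht => ?_
      exact mul_nonneg (step1 _ ht) (mul_nonneg (rpow_nonneg (le_of_lt ht) _) (exp_pos _).le)
    have hexp := NormedSpace.expSeries_div_hasSum_exp (𝔸 := ℝ) (-(c+1))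
    rw [← Real.exp_eq_exp_ℝ] at hexp
    have hexp2 : HasSum (fun k : ℕ => (k:ℝ) * ((-(c + 1)) ^ k / k.factorial)) (-(c+1) * exp (-(c+1))) := by
      rw [← hasSum_nat_add_iff' 1]
      simp only [Finset.sum_range_one, Nat.cast_zero, zero_mul, sub_zero]
      refine (hexp.mul_left (-(c+1))).congr_fun ?_
      intro k
      rw [Nat.factorial_succ]
      push_cast
      field_simp
      ring
    have h3 := ((hexp.mul_left c).add hexp2).mul_left ((1 / (c + 1)) ^ (-(c + 1)))
    have e : (fun k : ℕ => (-1) ^ k * (1 / (k.factorial * Gamma (c + k))) * ((1 / (c + 1)) ^ (-(c + 1)) * (1 / (1 / (c + 1))) ^ k * Gamma (c + 1 + k)))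
        = fun k : ℕ => (1 / (c + 1)) ^ (-(c + 1)) * (c * ((-(c + 1)) ^ k / k.factorial) + (k:ℝ) * ((-(c + 1)) ^ k / k.factorial)) := by
      ext k
      have := aux_Gpos hc k
      rw [show c + 1 + k = c + k + 1 by ring, Gamma_add_one (by positivity), one_div_one_div, neg_pow (c+1)]
      field_simp
    rw [e] at h
    rw [h.unique h3] at hI
    have : 0 < (1 / (c + 1)) ^ (-(c + 1)) := rpow_pos_of_pos hq _
    have h5 := nonneg_of_mul_nonneg_right hI this
    nlinarith [exp_pos (-(c+1))]
  · have h2 := ((aux_sumS (a := 1) (b := 1) (s := c + 1) (Y := c + 1) one_pos one_pos hc (by positivity) (by positivity)).mul_left ((1 / (c + 1)) ^ (-(c + 1))))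
    refine h2.congr fun k => ?_
    have := aux_Gpos hc k
    have := aux_Gpos one_pos k
    rw [abs_mul, abs_pow, abs_neg, abs_one, one_pow, one_mul, abs_of_pos (by positivity), one_div_one_div]
    unfold auxA
    field_simp


lemma aux_pow_exp {s y : ℝ} (hs : 0 < s) (hy : 0 < y) : exp (-(y / 2)) ≤ (2 * s) ^ s * y ^ (-s) := by
  have h1 : y / (2 * s) ≤ exp (y / (2 * s)) := by linarith [add_one_le_exp (y / (2 * s))]
  have h2 := rpow_le_rpow (by positivity) h1 hs.le
  rw [← exp_mul, show y / (2 * s) * s = y / 2 by field_simp, div_rpow hy.le (by positivity)] at h2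
  rw [rpow_neg hy.le, exp_neg, ← div_eq_mul_inv]
  have h3 : 0 < y ^ s := rpow_pos_of_pos hy _
  have h4 : 0 < (2 * s) ^ s := rpow_pos_of_pos (by positivity) _
  rw [inv_eq_one_div, div_le_div_iff₀ (exp_pos _) h3]
  rw [div_le_iff₀ h4] at h2
  linarith

lemma aux_exp_bound {s e : ℝ} (hs : 0 < s) (he : 0 < e) : ∃ C : ℝ, 0 ≤ C ∧ ∀ y : ℝ, 0 < y →
    ∫ t in Ioo (0:ℝ) 1, exp (-y * t) * (t ^ (s - 1) * (1 - t) ^ (e - 1)) ≤ C * y ^ (-s) := by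
  set K1 : ℝ := max 1 ((1/2) ^ (e - 1)) with hK1
  set K2 : ℝ := (2 * s) ^ s with hK2
  have hK1p : 0 < K1 := lt_max_of_lt_left one_pos
  have hK2p : 0 < K2 := rpow_pos_of_pos (by positivity) _
  obtain ⟨bi, bv⟩ := aux_beta hs he
  have hB : 0 < Gamma s * Gamma e / Gamma (s + e) := ProbabilityTheory.beta_pos hs he
  have hG := Gamma_pos_of_pos hs
  refine ⟨K1 * Gamma s + K2 * (Gamma s * Gamma e / Gamma (s + e)), by positivity, fun y hy => ?_⟩
  obtain ⟨gi, gv⟩ := aux_gam_mom hs hy 0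
  simp only [pow_zero, one_mul, Nat.cast_zero, add_zero, mul_one] at gi gv
  have gi' := gi.mono_set (Ioo_subset_Ioi_self : Ioo (0:ℝ) 1 ⊆ Ioi 0)
  have hle : ∫ t in Ioo (0:ℝ) 1, t ^ (s - 1) * exp (-y * t) ≤ y ^ (-s) * Gamma s := by
    rw [← gv]
    refine setIntegral_mono_set gi ?_ (Eventually.of_forall Ioo_subset_Ioi_self)
    refine (ae_restrict_iff' measurableSet_Ioi).2 (Eventually.of_forall fun t ht => ?_)
    exact mul_nonneg (rpow_nonneg (le_of_lt ht) _) (exp_pos _).le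
  have hi2 : IntegrableOn (fun t : ℝ => K1 * (t ^ (s - 1) * exp (-y * t)) + K2 * y ^ (-s) * (t ^ (s - 1) * (1 - t) ^ (e - 1))) (Ioo 0 1) :=
    (gi'.const_mul _).add (bi.const_mul _)
  calc _ ≤ ∫ t in Ioo (0:ℝ) 1, (K1 * (t ^ (s - 1) * exp (-y * t)) + K2 * y ^ (-s) * (t ^ (s - 1) * (1 - t) ^ (e - 1))) := by
        refine integral_mono_of_nonneg ?_ hi2 ?_
        · refine (ae_restrict_iff' measurableSet_Ioo).2 (Eventually.of_forall fun t ht => ?_)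
          exact mul_nonneg (exp_pos _).le (mul_nonneg (rpow_nonneg ht.1.le _) (rpow_nonneg (sub_nonneg.2 ht.2.le) _))
        · refine (ae_restrict_iff' measurableSet_Ioo).2 (Eventually.of_forall fun t ht => ?_)
          have h1 : 0 ≤ t ^ (s - 1) := rpow_nonneg ht.1.le _
          have h2 : 0 ≤ (1 - t) ^ (e - 1) := rpow_nonneg (sub_nonneg.2 ht.2.le) _
          have h3 := exp_pos (-y * t)
          have h4 : 0 < y ^ (-s) := rpow_pos_of_pos hy _
          simp only
          rcases le_or_gt t (1/2) with h | h
          · have h5 : (1 - t) ^ (e - 1) ≤ K1 := by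
              rcases le_or_gt 1 e with he1 | he1
              · exact (rpow_le_one (sub_nonneg.2 ht.2.le) (by linarith [ht.1]) (by linarith)).trans (le_max_left _ _)
              · exact (rpow_le_rpow_of_nonpos (by norm_num) (by linarith) (by linarith)).trans (le_max_right _ _)
            calc exp (-y * t) * (t ^ (s - 1) * (1 - t) ^ (e - 1)) ≤ exp (-y * t) * (t ^ (s - 1) * K1) := by gcongr
              _ = K1 * (t ^ (s - 1) * exp (-y * t)) + 0 := by ring
              _ ≤ _ := by gcongr; positivity
          · have h5 : exp (-y * t) ≤ K2 * y ^ (-s) := by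
              refine le_trans (exp_le_exp.2 ?_) (aux_pow_exp hs hy)
              nlinarith
            calc exp (-y * t) * (t ^ (s - 1) * (1 - t) ^ (e - 1)) ≤ K2 * y ^ (-s) * (t ^ (s - 1) * (1 - t) ^ (e - 1)) := by gcongr
              _ = 0 + K2 * y ^ (-s) * (t ^ (s - 1) * (1 - t) ^ (e - 1)) := by ring
              _ ≤ _ := by gcongr; positivity
    _ = K1 * (∫ t in Ioo (0:ℝ) 1, t ^ (s - 1) * exp (-y * t)) + K2 * y ^ (-s) * (Gamma s * Gamma e / Gamma (s + e)) := by
        rw [integral_add (gi'.const_mul _) (bi.const_mul _), integral_const_mul, integral_const_mul, bv]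
    _ ≤ K1 * (y ^ (-s) * Gamma s) + K2 * y ^ (-s) * (Gamma s * Gamma e / Gamma (s + e)) := by gcongr
    _ = _ := by ring

/-- inner Euler transform -/
lemma aux_E {s e z : ℝ} (hs : 0 < s) (he : 0 < e) (hz : 0 < z) :
    HasSum (fun k : ℕ => (-z) ^ k / k.factorial * (Gamma (s + k) * Gamma e / Gamma (s + e + k)))
      (∫ t in Ioo (0:ℝ) 1, exp (-z * t) * (t ^ (s - 1) * (1 - t) ^ (e - 1))) := by
  have h := (aux_term measurableSet_Ioo (fun t => 1 * t) (fun t => t ^ (s - 1) * (1 - t) ^ (e - 1))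
        (S := Ioo 0 1) (fun t ht => mul_nonneg one_pos.le ht.1.le)
        (fun t ht => mul_nonneg (rpow_nonneg ht.1.le _) (rpow_nonneg (sub_nonneg.2 ht.2.le) _))
        (fun k => (-z) ^ k / k.factorial) _ (fun k => (aux_beta_mom hs he k).1)
        (fun k => (aux_beta_mom hs he k).2) ?_).2
  · simp only [one_pow, one_mul] at h
    convert! h using 1
    congr 1; ext t; congr 1
    have hexp := NormedSpace.expSeries_div_hasSum_exp (𝔸 := ℝ) (-z * t)
    rw [← Real.exp_eq_exp_ℝ] at hexp
    rw [← hexp.tsum_eq]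
    congr 1; ext k
    rw [mul_pow]; ring
  · have hse : 0 < s + e := by positivity
    refine ((aux_sumS hs one_pos hse one_pos hz).mul_left (Gamma e)).congr fun k => ?_
    have := aux_Gpos hs k
    have := aux_Gpos hse k
    have := Gamma_pos_of_pos he
    have := aux_Gpos one_pos k
    rw [abs_div, abs_pow, abs_neg, abs_of_pos hz, Nat.abs_cast]
    unfold auxA
    field_simp
    try ring

lemma aux_mellin_bound {a b c s : ℝ} (ha : 0 < a) (hb : a < b) (hc : a < c) (hs : 0 < s) (hsa : s < a) :
    ∃ M : ℝ, ∀ q : ℝ, 0 < q → 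
      IntegrableOn (fun u => auxPhi a b c u * (u ^ (s - 1) * exp (-q * u))) (Ioi 0) ∧
      ∫ u in Ioi (0:ℝ), auxPhi a b c u * (u ^ (s - 1) * exp (-q * u)) ≤ M := by
  have hb0 : 0 < b := ha.trans hb
  have hc0 : 0 < c := ha.trans hc
  have hcs : 0 < c - s := by linarith
  have hba : 0 < b - a := by linarith
  obtain ⟨C, hC0, hC⟩ := aux_exp_bound hs hcs
  set E : ℝ → ℝ := fun z => ∫ t in Ioo (0:ℝ) 1, exp (-z * t) * (t ^ (s - 1) * (1 - t) ^ (c - s - 1)) with hE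
  have hEnn : ∀ z, 0 ≤ E z := fun z => setIntegral_nonneg measurableSet_Ioo fun t ht =>
    mul_nonneg (exp_pos _).le (mul_nonneg (rpow_nonneg ht.1.le _) (rpow_nonneg (sub_nonneg.2 ht.2.le) _))
  have hG1 := Gamma_pos_of_pos hcs
  have hG2 := Gamma_pos_of_pos hba
  obtain ⟨bi, bv⟩ := aux_beta (p := a - s) (q := b - a) (by linarith) hba
  refine ⟨C * (Gamma (a - s) * Gamma (b - a) / Gamma (a - s + (b - a))) / (Gamma (c - s) * Gamma (b - a)), fun q hq => ?_⟩
  have hy : 0 < 1 / q := by positivity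
  have habs : ∀ k : ℕ, |(-1) ^ k * auxA a b c k| = auxA a b c k := fun k => by
    rw [abs_mul, abs_pow, abs_neg, abs_one, one_pow, one_mul, abs_of_pos (auxA_pos ha hb0 hc0 k)]
  -- the Gaussian sum
  have hsum := aux_sumS ha hb0 hc0 hs hy
  have h1 := (aux_term measurableSet_Ioi (fun t => t) (fun t => t ^ (s - 1) * exp (-q * t))
        (S := Ioi 0) (fun t ht => le_of_lt ht)
        (fun t ht => mul_nonneg (rpow_nonneg (le_of_lt ht) _) (exp_pos _).le)
        (fun k => (-1) ^ k * auxA a b c k) _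
        (fun k => (aux_gam_mom hs hq k).1)
        (fun k => (aux_gam_mom hs hq k).2) (by
          refine (hsum.mul_left (q ^ (-s))).congr fun k => ?_
          rw [habs]; ring))
  have h2 := (aux_term measurableSet_Ioo (fun t => 1 * t) (fun t => t ^ (a - 1) * (1 - t) ^ (b - a - 1))
        (S := Ioo 0 1) (fun t ht => mul_nonneg one_pos.le ht.1.le)
        (fun t ht => mul_nonneg (rpow_nonneg ht.1.le _) (rpow_nonneg (sub_nonneg.2 ht.2.le) _))
        (fun k => (-(1 / q)) ^ k / k.factorial * (Gamma (s + k) * Gamma (c - s) / Gamma (s + (c - s) + k)))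
        _ (fun k => (aux_beta_mom ha hba k).1)
        (fun k => (aux_beta_mom ha hba k).2) (by
          refine (hsum.mul_left (Gamma (c - s) * Gamma (b - a))).congr fun k => ?_
          have := aux_Gpos hs k
          have := aux_Gpos ha k
          have := aux_Gpos hb0 k
          have := aux_Gpos hc0 k
          rw [show s + (c - s) + k = c + k by ring, show a + (b - a) + k = b + k by ring, abs_mul, abs_div, abs_pow, abs_neg, abs_of_pos hy, Nat.abs_cast,
            abs_of_pos (by positivity)]
          unfold auxA
          field_simp
          try ring)).2
  refine ⟨h1.1 fun u hu => ?_, ?_⟩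
  · refine Summable.of_norm ?_
    refine (aux_sum0 ha hb0 hc0 hu).congr fun k => ?_
    rw [norm_mul, Real.norm_eq_abs, habs, norm_pow, Real.norm_of_nonneg (le_of_lt hu)]
  have e : ∀ k : ℕ, (-1) ^ k * auxA a b c k * (q ^ (-s) * (1 / q) ^ k * Gamma (s + k)) = 
      (q ^ (-s) / (Gamma (c - s) * Gamma (b - a))) * ((-(1 / q)) ^ k / k.factorial * (Gamma (s + k) * Gamma (c - s) / Gamma (s + (c - s) + k)) * (1 ^ k * (Gamma (a + k) * Gamma (b - a) / Gamma (a + (b - a) + k)))) := by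
    intro k
    have := aux_Gpos hs k
    have := aux_Gpos ha k
    have := aux_Gpos hb0 k
    have := aux_Gpos hc0 k
    rw [show s + (c - s) + k = c + k by ring, show a + (b - a) + k = b + k by ring, neg_pow (1 / q)]
    unfold auxA
    field_simp
    try ring
  have h3 := h1.2
  simp_rw [e] at h3
  have h4 := h3.unique (h2.mul_left _)
  change ∫ u in Ioi (0:ℝ), auxPhi a b c u * (u ^ (s - 1) * exp (-q * u)) = _ at h4
  rw [h4]
  have h5 : ∫ t in Ioo (0:ℝ) 1, (∑' k : ℕ, (-(1 / q)) ^ k / k.factorial * (Gamma (s + k) * Gamma (c - s) / Gamma (s + (c - s) + k)) * (1 * t) ^ k) * (t ^ (a - 1) * (1 - t) ^ (b - a - 1))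
      ≤ ∫ t in Ioo (0:ℝ) 1, (C * q ^ s) * (t ^ (a - s - 1) * (1 - t) ^ (b - a - 1)) := by
    have hEt : ∀ t ∈ Ioo (0:ℝ) 1, (∑' k : ℕ, (-(1 / q)) ^ k / k.factorial * (Gamma (s + k) * Gamma (c - s) / Gamma (s + (c - s) + k)) * (1 * t) ^ k) = E (1 / q * t) := by
      intro t ht
      simp only [hE]
      rw [← (aux_E hs hcs (mul_pos hy ht.1)).tsum_eq]
      congr 1; ext k
      rw [one_mul, ← neg_mul, mul_pow]
      ring
    refine integral_mono_of_nonneg ?_ (bi.const_mul _) ?_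
    · refine (ae_restrict_iff' measurableSet_Ioo).2 (Eventually.of_forall fun t ht => ?_)
      simp only
      rw [hEt t ht]
      exact mul_nonneg (hEnn _) (mul_nonneg (rpow_nonneg ht.1.le _) (rpow_nonneg (sub_nonneg.2 ht.2.le) _))
    · refine (ae_restrict_iff' measurableSet_Ioo).2 (Eventually.of_forall fun t ht => ?_)
      simp only
      rw [hEt t ht]
      have ht0 := ht.1
      have h6 := hC (1 / q * t) (by positivity)
      have h7 : (1 / q * t) ^ (-s) = q ^ s * t ^ (-s) := by
        rw [mul_rpow hy.le ht0.le, one_div, inv_rpow hq.le, rpow_neg hq.le, inv_inv]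
      have h8 : t ^ (a - s - 1) = t ^ (-s) * t ^ (a - 1) := by
        rw [← rpow_add ht0]; ring_nf
      rw [h7] at h6
      have h9 : 0 ≤ (1 - t) ^ (b - a - 1) := rpow_nonneg (sub_nonneg.2 ht.2.le) _
      calc E (1 / q * t) * (t ^ (a - 1) * (1 - t) ^ (b - a - 1)) ≤ (C * (q ^ s * t ^ (-s))) * (t ^ (a - 1) * (1 - t) ^ (b - a - 1)) := by
            gcongr
        _ = _ := by rw [h8]; ring
  rw [integral_const_mul, bv] at h5
  have hqs : 0 < q ^ (-s) := rpow_pos_of_pos hq _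
  calc _ ≤ q ^ (-s) / (Gamma (c - s) * Gamma (b - a)) * (C * q ^ s * (Gamma (a - s) * Gamma (b - a) / Gamma (a - s + (b - a)))) := by
        gcongr
    _ = (q ^ (-s) * q ^ s) * (C * (Gamma (a - s) * Gamma (b - a) / Gamma (a - s + (b - a))) / (Gamma (c - s) * Gamma (b - a))) := by ring
    _ = _ := by rw [← rpow_add hq]; simp

lemma aux_mellin_int {a b c s : ℝ} (ha : 0 < a) (hb : a < b) (hc : a < c) (hs : 0 < s) (hsa : s < a)
    (hpos : ∀ u, 0 < u → 0 ≤ auxPhi a b c u) :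
    IntegrableOn (fun u => auxPhi a b c u * u ^ (s - 1)) (Ioi 0) := by
  obtain ⟨M, hM⟩ := aux_mellin_bound ha hb hc hs hsa
  have key : ∀ X : ℝ, 0 < X → IntegrableOn (fun u => auxPhi a b c u * u ^ (s - 1)) (Ioc 0 X) ∧
      ∫ u in Ioc 0 X, ‖auxPhi a b c u * u ^ (s - 1)‖ ≤ exp 1 * M := by
    intro X hX
    obtain ⟨h1, h2⟩ := hM (1 / X) (by positivity)
    have h1' := h1.mono_set (Ioc_subset_Ioi_self : Ioc 0 X ⊆ Ioi 0)
    have hnn : ∀ u ∈ Ioi (0:ℝ), 0 ≤ auxPhi a b c u * u ^ (s - 1) := fun u hu =>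
      mul_nonneg (hpos u hu) (rpow_nonneg (le_of_lt hu) _)
    have hle : ∀ u ∈ Ioc 0 X, ‖auxPhi a b c u * u ^ (s - 1)‖ ≤ exp 1 * (auxPhi a b c u * (u ^ (s - 1) * exp (-(1 / X) * u))) := by
      intro u hu
      have h := hnn u hu.1
      rw [Real.norm_of_nonneg h]
      have : 1 ≤ exp 1 * exp (-(1 / X) * u) := by
        rw [← exp_add]
        apply one_le_exp
        have : u / X ≤ 1 := (div_le_one hX).2 hu.2
        have e : -(1 / X) * u = - (u / X) := by ring
        rw [e]; linarith
      calc auxPhi a b c u * u ^ (s - 1) = (auxPhi a b c u * u ^ (s - 1)) * 1 := by ring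
        _ ≤ (auxPhi a b c u * u ^ (s - 1)) * (exp 1 * exp (-(1 / X) * u)) := by gcongr
        _ = _ := by ring
    have hmeas : AEStronglyMeasurable (fun u => auxPhi a b c u * u ^ (s - 1)) (volume.restrict (Ioc 0 X)) := by
      have := h1'.1.mul (Measurable.aestronglyMeasurable (μ := volume.restrict (Ioc 0 X)) (f := fun u : ℝ => exp ((1 / X) * u)) (by fun_prop))
      refine this.congr (Eventually.of_forall fun u => ?_)
      simp only [Pi.mul_apply]
      rw [mul_assoc, mul_assoc, ← exp_add]
      simp
    have hi : IntegrableOn (fun u => auxPhi a b c u * u ^ (s - 1)) (Ioc 0 X) :=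
      Integrable.mono' (h1'.const_mul (exp 1)) hmeas
        ((ae_restrict_iff' measurableSet_Ioc).2 (Eventually.of_forall hle))
    refine ⟨hi, ?_⟩
    calc _ ≤ ∫ u in Ioc 0 X, exp 1 * (auxPhi a b c u * (u ^ (s - 1) * exp (-(1 / X) * u))) :=
          setIntegral_mono_on hi.norm (h1'.const_mul _) measurableSet_Ioc hle
      _ = exp 1 * ∫ u in Ioc 0 X, (auxPhi a b c u * (u ^ (s - 1) * exp (-(1 / X) * u))) := integral_const_mul _ _
      _ ≤ exp 1 * ∫ u in Ioi 0, (auxPhi a b c u * (u ^ (s - 1) * exp (-(1 / X) * u))) := by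
          gcongr
          refine (ae_restrict_iff' measurableSet_Ioi).2 (Eventually.of_forall fun t ht => ?_)
          have := mul_nonneg (hnn t ht) (exp_pos (-(1 / X) * t)).le
          simpa [mul_assoc] using this
          exact Ioc_subset_Ioi_self
      _ ≤ _ := by gcongr
  refine integrableOn_Ioi_of_intervalIntegral_norm_bounded (l := atTop) (b := fun n : ℕ => (n:ℝ) + 1) (exp 1 * M) 0
    (fun n => (key _ (by positivity)).1) (tendsto_natCast_atTop_atTop.atTop_add tendsto_const_nhds) 
    (Eventually.of_forall fun n => ?_)
  rw [intervalIntegral.integral_of_le (by positivity)]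
  exact (key _ (by positivity)).2


noncomputable def auxC (a b c s : ℝ) (k : ℕ) : ℝ := auxA a b c k * Gamma (2 * (s + k)) / 4 ^ k

lemma auxC_pos {a b c s : ℝ} (ha : 0 < a) (hb : 0 < b) (hc : 0 < c) (hs : 0 < s) (k : ℕ) : 0 < auxC a b c s k := by
  have := auxA_pos ha hb hc k
  have : 0 < Gamma (2 * (s + k)) := Gamma_pos_of_pos (by positivity)
  unfold auxC; positivity

lemma auxC_succ {a b c s : ℝ} (ha : 0 < a) (hb : 0 < b) (hc : 0 < c) (hs : 0 < s) (k : ℕ) :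
    auxC a b c s (k + 1) * ((k + 1) * (b + k) * (c + k)) = (a + k) * (s + k) * (s + 1 / 2 + k) * auxC a b c s k := by
  have e : Gamma (2 * (s + (k + 1 : ℕ))) = (2 * (s + k) + 1) * (2 * (s + k)) * Gamma (2 * (s + k)) := by
    rw [show (2 * (s + (k + 1 : ℕ)) : ℝ) = 2 * (s + k) + 1 + 1 by push_cast; ring, Gamma_add_one (by positivity),
      Gamma_add_one (by positivity)]
    ring
  unfold auxC
  rw [auxA_succ ha hb hc, e]
  field_simp
  ring

lemma aux_diverge {a b c s : ℝ} (ha : 0 < a) (hb : 0 < b) (hc : 0 < c) (hs : 0 < s)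
    (h : b + c < a + 2 * s + 1 / 2) : ¬ Summable (auxC a b c s) := by
  intro hsum
  set η := a + 2 * s + 1 / 2 - b - c with hη
  have hη0 : 0 < η := by linarith
  set P := a * (2 * s + 1 / 2) + s * (s + 1 / 2) - b * c with hP
  obtain ⟨K, hK⟩ := exists_nat_ge (|P| / η + 1)
  rw [← le_sub_iff_add_le, div_le_iff₀ hη0] at hK
  have hmono : ∀ k : ℕ, K ≤ k → k * auxC a b c s k ≤ (k + 1 : ℕ) * auxC a b c s (k + 1) := by
    intro k hk
    have h1 := auxC_succ ha hb hc hs k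
    have h2 := auxC_pos ha hb hc hs k
    have hk' : (K:ℝ) ≤ k := by exact_mod_cast hk
    have hk0 : (0:ℝ) ≤ k := by positivity
    have h3 : k * ((b + k) * (c + k)) ≤ (a + k) * (s + k) * (s + 1 / 2 + k) := by
      have h4 : |P| ≤ η * k := by nlinarith
      have h5 : -(η * k) ≤ P := (neg_le_neg h4).trans (neg_abs_le P)
      have h6 : 0 ≤ (η * k + P) * k := mul_nonneg (by linarith) hk0
      have h7 : 0 < a * s * (s + 1/2) := by positivity
      have : (a + k) * (s + k) * (s + 1 / 2 + k) - k * ((b + k) * (c + k)) = (η * k + P) * k + a * s * (s + 1/2) := by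
        rw [hη, hP]; ring
      linarith
    have h8 : 0 < (b + k) * (c + k) := by positivity
    rw [← mul_le_mul_iff_left₀ h8]
    calc (k:ℝ) * auxC a b c s k * ((b + k) * (c + k)) = k * ((b + k) * (c + k)) * auxC a b c s k := by ring
      _ ≤ (a + k) * (s + k) * (s + 1 / 2 + k) * auxC a b c s k := by gcongr
      _ = _ := by rw [← h1]; push_cast; ring
  have hKpos : 0 < (K:ℝ) := by
    by_contra hn
    have : (K:ℝ) - 1 < 0 := by linarith
    have := mul_neg_of_neg_of_pos this hη0
    linarith [abs_nonneg P]
  have hge : ∀ k : ℕ, K ≤ k → K * auxC a b c s K ≤ k * auxC a b c s k := by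
    intro k hk
    induction k, hk using Nat.le_induction with
    | base => exact le_rfl
    | succ n hn ih => exact ih.trans (hmono n hn)
  set m := K * auxC a b c s K with hm
  have hm0 : 0 < m := mul_pos hKpos (auxC_pos ha hb hc hs K)
  refine Real.not_summable_one_div_natCast ?_
  rw [← summable_nat_add_iff K]
  have h9 := ((summable_nat_add_iff K).2 hsum).mul_left (1 / m)
  refine h9.of_nonneg_of_le (fun k => by positivity) fun k => ?_
  have h10 := hge (k + K) (by omega)
  have h11 : 0 < ((k + K : ℕ) : ℝ) := by push_cast; positivity
  rw [div_le_iff₀ h11, div_mul_eq_mul_div, div_mul_eq_mul_div, le_div_iff₀ hm0]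
  linarith

open ProbabilityTheory in
lemma aux_part2 {a b c : ℝ} (ha : 0 < a) (hb : a < b) (hc : a < c) (hpos : ∀ u, 0 < u → 0 ≤ auxPhi a b c u) :
    3 * a + 1 / 2 ≤ b + c := by
  by_contra! hlt
  have hb0 : 0 < b := ha.trans hb
  have hc0 : 0 < c := ha.trans hc
  obtain ⟨s, hs1, hsa⟩ := exists_between (show max 0 ((b + c - a - 1 / 2) / 2) < a from max_lt ha (by linarith))
  have hs : 0 < s := (le_max_left _ _).trans_lt hs1
  have hs2 : (b + c - a - 1 / 2) / 2 < s := (le_max_right _ _).trans_lt hs1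
  refine aux_diverge ha hb0 hc0 hs (by linarith) ?_
  have hmelInt := aux_mellin_int ha hb hc hs hsa hpos
  have hnn : ∀ u ∈ Ioi (0:ℝ), 0 ≤ auxPhi a b c u * u ^ (s - 1) := fun u hu =>
      mul_nonneg (hpos u hu) (rpow_nonneg (le_of_lt hu) _)
  set μ : Measure ℝ := (volume.restrict (Ioi 0)).withDensity (fun u => ENNReal.ofReal (auxPhi a b c u * u ^ (s - 1))) with hμ
  have : IsFiniteMeasure μ := isFiniteMeasure_withDensity_ofReal hmelInt.2
  set X : ℝ → ℝ := fun u => -2 * u ^ (1 / 2 : ℝ) with hX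
  have hXm : Measurable X := by fun_prop
  have hae : ∀ᵐ u ∂μ, 0 < u := by
    refine (withDensity_absolutelyContinuous _ _).ae_le ?_
    exact ae_restrict_mem measurableSet_Ioi
  have hexpint : ∀ t : ℝ, 0 ≤ t → Integrable (fun u => exp (t * X u)) μ ∧ ∀ᵐ u ∂μ, ‖exp (t * X u)‖ ≤ 1 := by
    intro t ht
    have h1 : ∀ᵐ u ∂μ, ‖exp (t * X u)‖ ≤ 1 := by
      filter_upwards [hae] with u hu
      rw [Real.norm_of_nonneg (exp_pos _).le, exp_le_one_iff]
      have : 0 ≤ u ^ (1 / 2 : ℝ) := rpow_nonneg hu.le _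
      simp only [hX]
      nlinarith [mul_nonneg ht this]
    exact ⟨(integrable_const (1:ℝ)).mono' (by fun_prop) h1, h1⟩
  have hmgf_le : ∀ t : ℝ, 0 ≤ t → mgf X μ t ≤ μ.real univ := by
    intro t ht
    have := norm_integral_le_of_norm_le_const (hexpint t ht).2
    rw [one_mul] at this
    exact (le_abs_self _).trans this
  have hsetint : ∀ t : ℝ, 0 < t → t ∈ interior (integrableExpSet X μ) := by
    intro t ht
    rw [mem_interior]
    exact ⟨Ioi 0, fun x hx => (hexpint x (le_of_lt hx)).1, isOpen_Ioi, ht⟩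
  -- evaluation at real points
  have hreal : ∀ p : ℝ, 1 < p → mgf X μ p = 2 * (2 * p) ^ (-2 * s) * ∑' k : ℕ, auxC a b c s k * (-(1 / p ^ 2)) ^ k := by
    intro p hp
    have hp0 : 0 < p := by linarith
    have hmom : ∀ k : ℕ, IntegrableOn (fun u : ℝ => u ^ k * (u ^ (s - 1) * exp (-(2 * p) * u ^ (1 / 2 : ℝ)))) (Ioi 0) ∧
        ∫ u in Ioi (0:ℝ), u ^ k * (u ^ (s - 1) * exp (-(2 * p) * u ^ (1 / 2 : ℝ))) = 2 * (2 * p) ^ (-2 * s) * (1 / (4 * p ^ 2)) ^ k * Gamma (2 * (s + k)) := by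
      intro k
      have hk : (-1:ℝ) < s + k - 1 := by have : (0:ℝ) ≤ k := by positivity
                                         linarith
      have h1 := integrableOn_rpow_mul_exp_neg_mul_rpow hk (one_half_pos (α := ℝ)) (show 0 < 2 * p by positivity)
      have h2 := integral_rpow_mul_exp_neg_mul_rpow (one_half_pos (α := ℝ)) hk (show 0 < 2 * p by positivity)
      have e : EqOn (fun t : ℝ => t ^ (s + k - 1) * exp (-(2 * p) * t ^ (1 / 2 : ℝ)))
          (fun t : ℝ => t ^ k * (t ^ (s - 1) * exp (-(2 * p) * t ^ (1 / 2 : ℝ)))) (Ioi 0) := by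
        intro t ht
        simp only
        rw [show s + k - 1 = s - 1 + k by ring, rpow_add_natCast (ne_of_gt ht)]
        ring
      refine ⟨h1.congr_fun e measurableSet_Ioi, ?_⟩
      rw [← setIntegral_congr_fun measurableSet_Ioi e, h2]
      rw [show -(s + k - 1 + 1) / (1 / 2) = -2 * s - (2 * k : ℕ) by push_cast; ring, rpow_sub_natCast (by positivity),
        show (s + k - 1 + 1) / (1 / 2) = 2 * (s + k) by ring, pow_mul, show (2 * p) ^ 2 = 4 * p ^ 2 by ring, one_div_pow]
      ring
    have h1 := (aux_term measurableSet_Ioi (fun t => t) (fun u => u ^ (s - 1) * exp (-(2 * p) * u ^ (1 / 2 : ℝ)))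
        (S := Ioi 0) (fun t ht => le_of_lt ht)
        (fun t ht => mul_nonneg (rpow_nonneg (le_of_lt ht) _) (exp_pos _).le)
        (fun k => (-1) ^ k * auxA a b c k) _
        (fun k => (hmom k).1) (fun k => (hmom k).2) (by
          have hr1 : 1 / p ^ 2 < 1 := by
            rw [div_lt_one (by positivity)]; nlinarith
          refine ((aux_sumL ha hb0 hc0 hs (show 0 < 1 / p ^ 2 by positivity) hr1).mul_left (2 * (2 * p) ^ (-2 * s))).congr fun k => ?_
          rw [abs_mul, abs_pow, abs_neg, abs_one, one_pow, one_mul, abs_of_pos (auxA_pos ha hb0 hc0 k)]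
          rw [show 1 / (4 * p ^ 2) = (1 / 4) * (1 / p ^ 2) by field_simp, mul_pow (1 / 4 : ℝ), one_div_pow 4]
          ring)).2
    have e2 : mgf X μ p = ∫ u in Ioi (0:ℝ), (∑' k : ℕ, (-1) ^ k * auxA a b c k * u ^ k) * (u ^ (s - 1) * exp (-(2 * p) * u ^ (1 / 2 : ℝ))) := by
      rw [mgf, hμ, integral_withDensity_eq_integral_toReal_smul₀ hmelInt.1.aemeasurable.ennreal_ofReal (Eventually.of_forall fun _ => ENNReal.ofReal_lt_top)]
      refine setIntegral_congr_fun measurableSet_Ioi fun u hu => ?_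
      simp only [smul_eq_mul, ENNReal.toReal_ofReal (hnn u hu), hX]
      unfold auxPhi
      rw [mul_assoc]
      congr 3
      ring
    rw [e2, ← h1.tsum_eq, ← tsum_mul_left]
    congr 1; ext k
    unfold auxC
    rw [show 1 / (4 * p ^ 2) = (1 / 4) * (1 / p ^ 2) by field_simp, mul_pow (1 / 4 : ℝ), one_div_pow 4, neg_pow (1 / p ^ 2)]
    ring
  -- holomorphic versions
  set R : ℂ → ℂ := fun w => ((2 * 2 ^ (-2 * s) : ℝ) : ℂ) * Complex.exp (-2 * s * w) *
      ∑' k : ℕ, (auxC a b c s k : ℂ) * (-Complex.exp (-2 * w)) ^ k with hR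
  have hRd : ∀ δ : ℝ, 0 < δ → DifferentiableOn ℂ R {w | δ < w.re} := by
    intro δ hδ
    have hr1 : exp (-2 * δ) < 1 := by rw [exp_lt_one_iff]; linarith
    refine DifferentiableOn.mul (by fun_prop) ?_
    refine Complex.differentiableOn_tsum_of_summable_norm
      (aux_sumL ha hb0 hc0 hs (exp_pos (-2 * δ)) hr1) (fun k => by fun_prop)
      (isOpen_lt continuous_const Complex.continuous_re) fun k w hw => ?_
    have h0 := auxC_pos ha hb0 hc0 hs k
    rw [norm_mul, norm_pow, norm_neg, Complex.norm_exp, Complex.norm_real, Real.norm_of_nonneg h0.le]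
    change auxC a b c s k * _ ≤ auxC a b c s k * _
    gcongr
    have hw' : δ < w.re := hw
    simp
    linarith
  set L : ℂ → ℂ := fun w => complexMGF X μ (Complex.exp w) with hL
  have hre : ∀ w : ℂ, |w.im| < π / 2 → 0 < (Complex.exp w).re := by
    intro w hw
    rw [Complex.exp_re]
    exact mul_pos (exp_pos _) (cos_pos_of_mem_Ioo (abs_lt.1 hw))
  have hEq : ∀ δ : ℝ, 0 < δ → EqOn L R ({w : ℂ | δ < w.re} ∩ {w | |w.im| < π / 2}) := by
    intro δ hδ
    have hopen : IsOpen ({w : ℂ | δ < w.re} ∩ {w | |w.im| < π / 2}) :=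
      (isOpen_lt continuous_const Complex.continuous_re).inter
        (isOpen_lt (Complex.continuous_im.abs) continuous_const)
    have hconv : Convex ℝ ({w : ℂ | δ < w.re} ∩ {w | |w.im| < π / 2}) := by
      refine (convex_halfSpace_re_gt δ).inter ?_
      have : {w : ℂ | |w.im| < π / 2} = {w : ℂ | -(π / 2) < w.im} ∩ {w | w.im < π / 2} := by
        ext w; simp [abs_lt]
      rw [this]
      exact (convex_halfSpace_im_gt _).inter (convex_halfSpace_im_lt _)
    have hLa : AnalyticOnNhd ℂ L ({w : ℂ | δ < w.re} ∩ {w | |w.im| < π / 2}) := by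
      refine DifferentiableOn.analyticOnNhd (fun w hw => ?_) hopen
      refine DifferentiableAt.differentiableWithinAt ?_
      have h1 := (analyticAt_complexMGF (hsetint _ (hre w hw.2))).differentiableAt
      exact h1.comp w Complex.differentiable_exp.differentiableAt
    have hRa : AnalyticOnNhd ℂ R ({w : ℂ | δ < w.re} ∩ {w | |w.im| < π / 2}) :=
      ((hRd δ hδ).mono inter_subset_left).analyticOnNhd hopen
    have hz0 : ((δ + 1 : ℝ) : ℂ) ∈ ({w : ℂ | δ < w.re} ∩ {w | |w.im| < π / 2}) := by
      constructor
      · simp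
      · simp [pi_pos]
    refine hLa.eqOn_of_preconnected_of_frequently_eq hRa hconv.isPreconnected hz0 ?_
    have ht : Tendsto (fun x : ℝ => (x : ℂ)) (𝓝[≠] (δ + 1)) (𝓝[≠] ((δ + 1 : ℝ) : ℂ)) := by
      refine tendsto_nhdsWithin_of_tendsto_nhds_of_eventually_within _
        (Complex.continuous_ofReal.tendsto _ |>.mono_left nhdsWithin_le_nhds) ?_
      filter_upwards [self_mem_nhdsWithin] with x hx
      exact fun h => hx (Complex.ofReal_injective h)
    refine ht.frequently (Eventually.frequently ?_)
    have : ∀ᶠ x : ℝ in 𝓝[≠] (δ + 1), 0 < x := nhdsWithin_le_nhds (lt_mem_nhds (by linarith))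
    filter_upwards [this] with x hx
    simp only [hL, hR]
    rw [← Complex.ofReal_exp, complexMGF_ofReal, hreal (exp x) (by rwa [one_lt_exp_iff])]
    rw [mul_rpow zero_le_two (exp_pos x).le, ← exp_mul, ← exp_nat_mul, ← mul_assoc, one_div, ← exp_neg]
    push_cast
    congr 2
    · congr 1
      ring
    · ext k
      congr 3
      congr 1
      ring
  -- bound on the imaginary axis
  have hbound : ∀ x : ℝ, 0 < x → ‖R (x + (π / 2 : ℝ) * Complex.I)‖ ≤ μ.real univ := by
    intro x hx
    have hcont : ContinuousAt R (x + (π / 2 : ℝ) * Complex.I) := by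
      refine ((hRd (x / 2) (by linarith)).differentiableAt ?_).continuousAt
      refine (isOpen_lt continuous_const Complex.continuous_re).mem_nhds ?_
      simp
      linarith
    have ht : Tendsto (fun θ : ℝ => ‖R (x + (θ : ℝ) * Complex.I)‖) (𝓝[<] (π / 2)) (𝓝 ‖R (x + (π / 2 : ℝ) * Complex.I)‖) := by
      have h1 : Tendsto (fun θ : ℝ => (x + (θ : ℝ) * Complex.I : ℂ)) (𝓝 (π / 2)) (𝓝 (x + (π / 2 : ℝ) * Complex.I)) := by
        apply Continuous.tendsto
        fun_prop
      exact ((hcont.tendsto.comp h1).norm).mono_left nhdsWithin_le_nhds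
    refine le_of_tendsto ht ?_
    have : Ioo 0 (π / 2) ∈ 𝓝[<] (π / 2) := Ioo_mem_nhdsLT (by positivity)
    filter_upwards [this] with θ hθ
    have him : |((x + (θ : ℝ) * Complex.I : ℂ)).im| < π / 2 := by
      simp [abs_of_pos hθ.1]
      linarith [hθ.2]
    rw [← hEq (x / 2) (by linarith) ⟨by simp; linarith, him⟩]
    exact norm_complexMGF_le_mgf.trans (hmgf_le _ (hre _ him).le)
  have hsumbd : ∀ x : ℝ, 0 < x → ∀ N : ℕ, 2 * 2 ^ (-2 * s) * exp (-2 * s * x) * ∑ k ∈ Finset.range N, auxC a b c s k * exp (-2 * x) ^ k ≤ μ.real univ := by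
    intro x hx N
    have hr1 : exp (-2 * x) < 1 := by rw [exp_lt_one_iff]; linarith
    have hS := aux_sumL ha hb0 hc0 hs (exp_pos (-2 * x)) hr1
    change Summable fun k => auxC a b c s k * exp (-2 * x) ^ k at hS
    have h1 : -Complex.exp (-2 * (x + (π / 2 : ℝ) * Complex.I)) = ((exp (-2 * x) : ℝ) : ℂ) := by
      rw [show (-2 * (x + (π / 2 : ℝ) * Complex.I) : ℂ) = ((-2 * x : ℝ) : ℂ) + -(π * Complex.I) by push_cast; ring, Complex.exp_add, Complex.exp_neg,
        Complex.exp_pi_mul_I, Complex.ofReal_exp]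
      simp
    have h2 := hbound x hx
    simp only [hR] at h2
    rw [h1, norm_mul, norm_mul, Complex.norm_exp, Complex.norm_real] at h2
    have h3 : ∑' k : ℕ, (auxC a b c s k : ℂ) * ((exp (-2 * x) : ℝ) : ℂ) ^ k = ((∑' k : ℕ, auxC a b c s k * exp (-2 * x) ^ k : ℝ) : ℂ) := by
      push_cast; rfl
    have hnn2 : ∀ k, 0 ≤ auxC a b c s k * exp (-2 * x) ^ k := fun k => by
      have := auxC_pos ha hb0 hc0 hs k
      positivity
    rw [h3, Complex.norm_real, Real.norm_of_nonneg (tsum_nonneg hnn2), Real.norm_of_nonneg (by positivity)] at h2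
    have h4 : (-2 * (s:ℂ) * (x + (π / 2 : ℝ) * Complex.I)).re = -2 * s * x := by simp
    rw [h4] at h2
    refine le_trans ?_ h2
    gcongr
    exact hS.sum_le_tsum _ fun k _ => hnn2 k
  refine summable_of_sum_range_le (c := μ.real univ / (2 * 2 ^ (-2 * s))) (fun k => (auxC_pos ha hb0 hc0 hs k).le) fun N => ?_
  rw [le_div_iff₀ (by positivity), mul_comm]
  have ht : Tendsto (fun x : ℝ => 2 * 2 ^ (-2 * s) * exp (-2 * s * x) * ∑ k ∈ Finset.range N, auxC a b c s k * exp (-2 * x) ^ k) (𝓝[>] 0) (𝓝 (2 * 2 ^ (-2 * s) * exp (-2 * s * 0) * ∑ k ∈ Finset.range N, auxC a b c s k * exp (-2 * 0) ^ k)) := by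
    refine Tendsto.mono_left (Continuous.tendsto ?_ 0) nhdsWithin_le_nhds
    fun_prop
  simp only [mul_zero, exp_zero, mul_one, one_pow] at ht
  refine le_of_tendsto ht ?_
  filter_upwards [self_mem_nhdsWithin] with x hx
  exact hsumbd x hx N

theorem stmt14 (α β γ : ℝ) (hα : -1 < α) (hγ : -1 < γ) (hβ : β < α + 1)
    (hpos : ∀ x : ℝ, 0 < x →
      0 ≤ ∫ t in (0 : ℝ)..x, (x ^ 2 - t ^ 2) ^ γ * t ^ (-β) * besselJ α t) :
    -(γ + 1 / 2) ≤ β ∧ -α - 1 < β ∧ β < α + 1 := by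
  set a := (α - β + 1) / 2 with ha
  set b := α + 1 with hb
  set c := a + (γ + 1) with hc
  have ha0 : 0 < a := by rw [ha]; linarith
  have hb0 : 0 < b := by rw [hb]; linarith
  have hg0 : 0 < γ + 1 := by linarith
  have hac : a < c := by linarith
  have hc0 : 0 < c := by linarith
  have hP : ∀ u, 0 < u → 0 ≤ auxPhi a b c u := by
    intro u hu
    set x := 2 * √u with hx
    have hx0 : 0 < x := by positivity
    have hxu : x ^ 2 = 4 * u := by rw [hx, mul_pow, Real.sq_sqrt hu.le]; ring
    have h0 := hpos x hx0
    rw [intervalIntegral.integral_of_le hx0.le, integral_Ioc_eq_integral_Ioo] at h0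
    have hmom : ∀ k : ℕ, IntegrableOn (fun t : ℝ => (t ^ 2) ^ k * (t ^ (2 * a - 1) * (x ^ 2 - t ^ 2) ^ γ)) (Ioo 0 x) ∧
        ∫ t in Ioo 0 x, (t ^ 2) ^ k * (t ^ (2 * a - 1) * (x ^ 2 - t ^ 2) ^ γ) =
          x ^ (2 * c - 2) / 2 * (4 * u) ^ k * (Gamma (a + k) * Gamma (γ + 1) / Gamma (c + k)) := by
      intro k
      obtain ⟨h1, h2⟩ := aux_beta_sq (p := a + k) (q := γ + 1) (by positivity) hg0 hx0
      have e : EqOn (fun t : ℝ => t ^ (2 * (a + k) - 1) * (x ^ 2 - t ^ 2) ^ (γ + 1 - 1))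
        (fun t : ℝ => (t ^ 2) ^ k * (t ^ (2 * a - 1) * (x ^ 2 - t ^ 2) ^ γ)) (Ioo 0 x) := by
        intro t ht
        simp only
        rw [show 2 * (a + k) - 1 = 2 * a - 1 + (2 * k : ℕ) by push_cast; ring, rpow_add_natCast ht.1.ne', add_sub_cancel_right, pow_mul]
        ring
      refine ⟨h1.congr_fun e measurableSet_Ioo, ?_⟩
      rw [← setIntegral_congr_fun measurableSet_Ioo e, h2]
      rw [show 2 * (a + k) + 2 * (γ + 1) - 2 = 2 * c - 2 + (2 * k : ℕ) by rw [hc]; push_cast; ring, rpow_add_natCast hx0.ne', pow_mul, hxu,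
        show a + k + (γ + 1) = c + k by rw [hc]; ring]
      ring
    have hGγ := Gamma_pos_of_pos hg0
    have hxc : 0 < x ^ (2 * c - 2) := rpow_pos_of_pos hx0 _
    have h1 := (aux_term measurableSet_Ioo (fun t => t ^ 2) (fun t => t ^ (2 * a - 1) * (x ^ 2 - t ^ 2) ^ γ)
        (S := Ioo 0 x) (fun t ht => sq_nonneg t)
        (fun t ht => mul_nonneg (rpow_nonneg ht.1.le _) (rpow_nonneg (by nlinarith [ht.1, ht.2]) _))
        (fun k => (-1) ^ k / (k.factorial * Gamma (b + k)) / 4 ^ k) _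
        (fun k => (hmom k).1) (fun k => (hmom k).2) (by
          refine ((aux_sum0 ha0 hb0 hc0 hu).mul_left (x ^ (2 * c - 2) / 2 * Gamma (γ + 1))).congr fun k => ?_
          have := aux_Gpos hb0 k
          have := aux_Gpos hc0 k
          rw [abs_div, abs_div, abs_pow, abs_neg, abs_one, one_pow, abs_of_pos (show 0 < (k.factorial : ℝ) * Gamma (b + k) by positivity), abs_of_pos (show (0:ℝ) < 4 ^ k by positivity), mul_pow]
          unfold auxA
          field_simp)).2
    have e : ∀ t ∈ Ioo 0 x, (x ^ 2 - t ^ 2) ^ γ * t ^ (-β) * besselJ α t = 2 ^ (-α) * ((∑' k : ℕ, (-1) ^ k / (k.factorial * Gamma (b + k)) / 4 ^ k * (t ^ 2) ^ k) * (t ^ (2 * a - 1) * (x ^ 2 - t ^ 2) ^ γ)) := by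
      intro t ht
      have ht0 := ht.1
      have e1 : besselJ α t = (t ^ α * 2 ^ (-α)) * ∑' k : ℕ, (-1) ^ k / (k.factorial * Gamma (b + k)) / 4 ^ k * (t ^ 2) ^ k := by
        unfold besselJ
        rw [← tsum_mul_left]
        congr 1; ext k
        rw [show 2 * (k:ℝ) + α = α + (2 * k : ℕ) by push_cast; ring, rpow_add_natCast (by positivity), pow_mul, div_rpow ht0.le zero_le_two,
          rpow_neg zero_le_two, div_pow, div_pow, show α + k + 1 = b + k by rw [hb]; ring]
        norm_num
        ring
      have e2 : t ^ (2 * a - 1) = t ^ (-β) * t ^ α := by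
        rw [← rpow_add ht0, ha]; ring_nf
      rw [e1, e2]; ring
    rw [setIntegral_congr_fun measurableSet_Ioo e, integral_const_mul, ← h1.tsum_eq] at h0
    have h2 := nonneg_of_mul_nonneg_right h0 (rpow_pos_of_pos two_pos _)
    have e3 : ∑' k : ℕ, (-1) ^ k / (k.factorial * Gamma (b + k)) / 4 ^ k * (x ^ (2 * c - 2) / 2 * (4 * u) ^ k * (Gamma (a + k) * Gamma (γ + 1) / Gamma (c + k)))
        = (x ^ (2 * c - 2) / 2 * Gamma (γ + 1)) * auxPhi a b c u := by
      unfold auxPhi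
      rw [← tsum_mul_left]
      congr 1; ext k
      have := aux_Gpos hb0 k
      have := aux_Gpos hc0 k
      rw [mul_pow]
      unfold auxA
      field_simp
    rw [e3] at h2
    exact nonneg_of_mul_nonneg_right h2 (by positivity)
  have hab : a < b := by
    by_contra! h
    exact aux_part1 ha0 hb0 hc0 h hP
  have h3 := aux_part2 ha0 hab hac hP
  refine ⟨?_, ?_, hβ⟩
  · rw [hc, hb, ha] at h3; linarith
  · rw [hb, ha] at hab; linarith
end

section
/- Let γ > −1 and α > −1 be real numbers, and let β satisfy max(−(γ + 1/2), −((2γ+1)/(2γ+3))(α+1)) ≤ β < α + 1. Then ∫₀ˣ (x² − t²)^γ t^{−β} J_α(t) dt ≥ 0 for every x > 0; moreover, the inequality is strict for every x > 0 unless either (α = γ + 1/2 and β = −(γ + 1/2)) or (γ = −1/2 and β = 0). -/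
open Real

noncomputable def poch (x : ℝ) : ℕ → ℝ
  | 0 => 1
  | n + 1 => poch x n * (x + n)

@[simp] lemma poch_zero (x : ℝ) : poch x 0 = 1 := rfl
lemma poch_succ (x : ℝ) (n : ℕ) : poch x (n + 1) = poch x n * (x + n) := rfl

lemma poch_pos {x : ℝ} (hx : 0 < x) (n : ℕ) : 0 < poch x n := by
  induction n with
  | zero => simp
  | succ n ih => rw [poch_succ]; positivity

lemma poch_nonneg {x : ℝ} (hx : 0 ≤ x) (n : ℕ) : 0 ≤ poch x n := by
  induction n with
  | zero => simp
  | succ n ih => rw [poch_succ]; positivity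

lemma poch_mono {x y : ℝ} (hx : 0 ≤ x) (hxy : x ≤ y) (n : ℕ) : poch x n ≤ poch y n := by
  induction n with
  | zero => simp
  | succ n ih =>
    rw [poch_succ, poch_succ]
    have := poch_nonneg hx n
    have h2 : 0 ≤ x + n := by positivity
    exact mul_le_mul ih (by linarith) h2 (this.trans ih)

lemma poch_add (x : ℝ) (m n : ℕ) : poch x (m + n) = poch x m * poch (x + m) n := by
  induction n with
  | zero => simp
  | succ n ih => rw [← add_assoc, poch_succ, ih, poch_succ]; push_cast; ring

lemma poch_succ_left (x : ℝ) (n : ℕ) : poch x (n + 1) = x * poch (x + 1) n := by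
  rw [add_comm, poch_add]; simp [poch_succ]

lemma poch_reflect (x : ℝ) (r : ℕ) : poch (1 - x - r) r = (-1) ^ r * poch x r := by
  induction r generalizing x with
  | zero => simp
  | succ r ih =>
    rw [poch_succ_left, poch_succ]
    have := ih x
    have h : (1 - x - ((r + 1 : ℕ) : ℝ) + 1) = 1 - x - r := by push_cast; ring
    rw [h, this]; push_cast; ring

lemma saal (u v w : ℝ) (n : ℕ) :
    ∑ k ∈ Finset.range (n + 1), (n.choose k : ℝ) * poch (w - u - v) (n - k) * poch u k * poch v k *
      poch (w + k) (n - k) = poch (w - u) n * poch (w - v) n := by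
  induction n with
  | zero => simp
  | succ n ih =>
    set T : ℕ → ℕ → ℝ := fun n k => (n.choose k : ℝ) * poch (w - u - v) (n - k) * poch u k * poch v k *
      poch (w + k) (n - k) with hT
    change ∑ k ∈ Finset.range (n + 1), T n k = _ at ih
    change ∑ k ∈ Finset.range (n + 1 + 1), T (n + 1) k = _
    set G : ℕ → ℝ := fun k => if k = 0 then 0 else (u + (k - 1 : ℕ)) * (v + (k - 1 : ℕ)) * T n (k - 1) with hG
    have h0 : T n (n + 1) = 0 := by simp [hT]
    have key : ∀ k ∈ Finset.range (n + 1 + 1), T (n + 1) k =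
        (w - u + n) * (w - v + n) * T n k - (G (k + 1) - G k) := by
      intro k hk
      rw [Finset.mem_range] at hk
      have hG1 : ∀ k, G (k + 1) = (u + k) * (v + k) * T n k := by intro k; simp [hG]
      rcases k with _ | k
      · rw [hG1]
        have : G 0 = 0 := by simp [hG]
        rw [this]
        simp [hT, poch_succ]; ring
      · rw [hG1, hG1]
        rcases Nat.lt_or_ge k n with h | h
        · obtain ⟨r, rfl⟩ : ∃ r, n = k + 1 + r := ⟨n - (k + 1), by omega⟩
          have e1 : k + 1 + r + 1 - (k + 1) = r + 1 := by omega
          have e2 : k + 1 + r - (k + 1) = r := by omega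
          have e3 : k + 1 + r - k = r + 1 := by omega
          simp only [hT, e1, e2, e3]
          have c1 : (((k + 1 + r + 1).choose (k + 1) : ℕ) : ℝ) = ((k + 1 + r).choose k : ℕ) + ((k + 1 + r).choose (k + 1) : ℕ) := by
            rw [Nat.choose_succ_succ]; push_cast; ring
          have c2 : (((k + 1 + r).choose (k + 1) : ℕ) : ℝ) * (k + 1) = ((k + 1 + r).choose k : ℕ) * (r + 1) := by
            have := Nat.choose_succ_right_eq (k + 1 + r) k
            rw [e3] at this
            exact_mod_cast this
          rw [c1, poch_succ_left (w + k) r, poch_succ (w - u - v), poch_succ u, poch_succ v, poch_succ (w + (k + 1 : ℕ))]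
          have e4 : w + (k : ℝ) + 1 = w + ((k + 1 : ℕ) : ℝ) := by push_cast; ring
          rw [e4]
          generalize (((k + 1 + r).choose (k + 1) : ℕ) : ℝ) = A at *
          generalize (((k + 1 + r).choose k : ℕ) : ℝ) = B at *
          generalize poch (w + ((k + 1 : ℕ) : ℝ)) r = p1
          push_cast
          have : A = B * (r + 1) / (k + 1) := by field_simp; linarith
          rw [this]
          field_simp
          ring
        · have : k = n := by omega
          subst this
          rw [h0]
          simp [hT, poch_succ]; ring
    rw [Finset.sum_congr rfl key, Finset.sum_sub_distrib, Finset.sum_range_sub, ← Finset.mul_sum,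
      Finset.sum_range_succ, ih, h0, poch_succ, poch_succ]
    have : G (n + 1 + 1) = 0 := by simp [hG, h0]
    rw [this]
    simp [hG]; ring

/-- Saalschütz, balanced form. -/
lemma saal2 (A b c : ℝ) (hb : 0 < b) (hc : 0 < c) (M : ℕ) :
    ∑ m ∈ Finset.range (M + 1), (-1 : ℝ) ^ m * (M.choose m : ℝ) * poch A m * poch (M - 1 + b + c - A) m /
      (poch b m * poch c m) = poch (b - A) M * poch (c - A) M / (poch b M * poch c M) := by
  have h := saal A (M - 1 + b + c - A) b M
  have e1 : b - (M - 1 + b + c - A) = 1 - (c - A) - M := by ring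
  rw [e1, poch_reflect] at h
  have hb' := fun n => (poch_pos hb n).ne'
  have hc' := fun n => (poch_pos hc n).ne'
  rw [eq_div_iff (mul_ne_zero (hb' M) (hc' M)), Finset.sum_mul]
  have hs : ((-1 : ℝ) ^ M) * (-1) ^ M = 1 := by rw [← mul_pow]; simp
  calc _ = (-1 : ℝ) ^ M * (poch (b - A) M * ((-1) ^ M * poch (c - A) M)) := by
        rw [← h, Finset.mul_sum]
        apply Finset.sum_congr rfl
        intro m hm
        obtain ⟨r, rfl⟩ : ∃ r, M = m + r := ⟨M - m, by rw [Finset.mem_range] at hm; omega⟩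
        have e2 : m + r - m = r := by omega
        have e3 : b - A - (((m + r : ℕ) : ℝ) - 1 + b + c - A) = 1 - (c + m) - r := by push_cast; ring
        rw [e2, e3, poch_reflect, poch_add b, poch_add c]
        have := hb' m
        have := hc' m
        have hr : ((-1 : ℝ) ^ r) * (-1) ^ r = 1 := by rw [← mul_pow]; simp
        field_simp
        rw [pow_add]
        linear_combination (-((-1 : ℝ) ^ m * ↑((m + r).choose m) * poch A m *
          poch (((m + r : ℕ) : ℝ) - 1 + b + c - A) m * poch (c + m) r * poch (b + m) r)) * hr
    _ = _ := by linear_combination (poch (b - A) M * poch (c - A) M) * hs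

/-- The coefficient `C_n`, a terminating balanced 4F3. -/
noncomputable def CC (σ A C b c : ℝ) (n : ℕ) : ℝ :=
  ∑ k ∈ Finset.range (n + 1), (-1 : ℝ) ^ k * (n.choose k : ℝ) * poch (n + 2 * σ - 1) k *
    (poch A k * poch C k / (poch σ k * poch b k * poch c k))

lemma CC_comm (σ A C b c : ℝ) (n : ℕ) : CC σ A C b c n = CC σ C A b c n := by
  unfold CC
  apply Finset.sum_congr rfl
  intros; ring

lemma whipple (σ A C b c : ℝ) (hσ : 0 < σ) (hb : 0 < b) (hc : 0 < c) (hbal : b + c = A + C + σ) (n : ℕ) :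
    CC σ A C b c n = n.factorial * poch σ n / (poch b n * poch c n) *
      ∑ j ∈ Finset.range (n + 1), (poch A j * poch (σ - C) j / (j.factorial * poch σ j)) *
        (poch (b - A) (n - j) * poch (c - A) (n - j) / ((n - j).factorial * poch σ (n - j))) := by
  have hb' := fun n => (poch_pos hb n).ne'
  have hc' := fun n => (poch_pos hc n).ne'
  have hs' := fun n => (poch_pos hσ n).ne'
  unfold CC
  set B := (n : ℝ) + 2 * σ - 1 with hB
  set S := B + C - σ with hS
  have step1 : ∀ k, poch B k * poch C k = ∑ j ∈ Finset.range (k + 1), (k.choose j : ℝ) * poch S (k - j) *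
      poch (σ - B) j * poch (σ - C) j * poch (σ + j) (k - j) := by
    intro k
    have := saal (σ - B) (σ - C) σ k
    have e : σ - (σ - B) - (σ - C) = S := by rw [hS]; ring
    rw [e, sub_sub_cancel, sub_sub_cancel] at this
    exact this.symm
  have step2 : ∀ k ∈ Finset.range (n + 1), (-1 : ℝ) ^ k * (n.choose k : ℝ) * poch B k *
      (poch A k * poch C k / (poch σ k * poch b k * poch c k)) =
      ∑ j ∈ Finset.range (k + 1), (-1 : ℝ) ^ k * (n.choose k : ℝ) * (k.choose j : ℝ) * poch A k * poch S (k - j) /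
        (poch b k * poch c k) * (poch (σ - B) j * poch (σ - C) j / poch σ j) := by
    intro k _
    calc _ = (-1 : ℝ) ^ k * (n.choose k : ℝ) * 
      (poch A k / (poch σ k * poch b k * poch c k)) * (poch B k * poch C k) := by ring
      _ = _ := by
        rw [step1, Finset.mul_sum]
        apply Finset.sum_congr rfl
        intro j hj
        obtain ⟨r, rfl⟩ : ∃ r, k = j + r := ⟨k - j, by rw [Finset.mem_range] at hj; omega⟩
        have e2 : j + r - j = r := by omega
        have h1 := hs' (j + r)
        rw [poch_add σ] at h1 ⊢
        have h2 := hs' j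
        have h3 : poch (σ + j) r ≠ 0 := (poch_pos (by positivity) r).ne'
        have := hb' (j + r)
        have := hc' (j + r)
        rw [e2]
        field_simp
  rw [Finset.sum_congr rfl step2, Finset.range_eq_Ico, Finset.sum_sigma', Finset.mul_sum]
  simp only [← Finset.range_eq_Ico]
  have swap : ∀ f : ℕ → ℕ → ℝ, ∑ x ∈ (Finset.range (n + 1)).sigma (fun k => Finset.range (k + 1)), f x.1 x.2
      = ∑ j ∈ Finset.range (n + 1), ∑ m ∈ Finset.range (n - j + 1), f (j + m) j := by
    intro f
    rw [Finset.sum_sigma']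
    apply Finset.sum_bij' (fun x _ => (⟨x.2, x.1 - x.2⟩ : Sigma (fun _ : ℕ => ℕ))) (fun x _ => (⟨x.1 + x.2, x.1⟩ : Sigma (fun _ : ℕ => ℕ)))
    · rintro ⟨k, j⟩ h; simp at h ⊢; omega
    · rintro ⟨k, j⟩ h; simp at h ⊢; omega
    · rintro ⟨k, j⟩ h; simp at h ⊢; omega
    · rintro ⟨k, j⟩ h; simp at h ⊢
    · rintro ⟨k, j⟩ h; simp at h ⊢; congr 1; omega
  rw [swap (fun k j => (-1 : ℝ) ^ k * (n.choose k : ℝ) * (k.choose j : ℝ) * poch A k * poch S (k - j) /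
        (poch b k * poch c k) * (poch (σ - B) j * poch (σ - C) j / poch σ j))]
  apply Finset.sum_congr rfl
  intro j hj
  obtain ⟨M, rfl⟩ : ∃ M, n = j + M := ⟨n - j, by rw [Finset.mem_range] at hj; omega⟩
  have e2 : j + M - j = M := by omega
  rw [e2]
  have hbj : 0 < b + j := by positivity
  have hcj : 0 < c + j := by positivity
  have hs2 := saal2 (A + j) (b + j) (c + j) hbj hcj M
  have eS : (M : ℝ) - 1 + (b + j) + (c + j) - (A + j) = S := by
    rw [hS, hB]; push_cast; linarith
  have eb : b + j - (A + j) = b - A := by ring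
  have ec : c + j - (A + j) = c - A := by ring
  rw [eS, eb, ec] at hs2
  have eB : σ - B = 1 - (σ + M) - j := by rw [hB]; push_cast; ring
  have hσM : poch σ (j + M) = poch σ M * poch (σ + M) j := by rw [add_comm j M, poch_add]
  calc _ = (-1 : ℝ) ^ j * ((j + M).choose j : ℝ) * (poch A j / (poch b j * poch c j)) *
        (poch (σ - B) j * poch (σ - C) j / poch σ j) * 
        ∑ m ∈ Finset.range (M + 1), (-1 : ℝ) ^ m * (M.choose m : ℝ) * poch (A + j) m * poch S m /
          (poch (b + j) m * poch (c + j) m) := by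
        rw [Finset.mul_sum]
        apply Finset.sum_congr rfl
        intro m hm
        rw [Finset.mem_range] at hm
        have ch : (((j + M).choose (j + m) : ℕ) : ℝ) * ((j + m).choose j : ℕ) = ((j + M).choose j : ℕ) * (M.choose m : ℕ) := by
          have := Nat.choose_mul (n := j + M) (k := j + m) (s := j) (by omega)
          rw [e2, Nat.add_sub_cancel_left] at this
          exact_mod_cast this
        have e3 : j + m - j = m := by omega
        rw [e3, poch_add A, poch_add b, poch_add c, pow_add]
        linear_combination ((-1) ^ j * (-1) ^ m * (poch A j * poch (A + ↑j) m) * poch S m /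
    (poch b j * poch (b + ↑j) m * (poch c j * poch (c + ↑j) m)) * (poch (σ - B) j * poch (σ - C) j / poch σ j)) * ch
    _ = _ := by
        rw [hs2, eB, poch_reflect, hσM, poch_add b, poch_add c]
        have hr : ((-1 : ℝ) ^ j) * (-1) ^ j = 1 := by rw [← mul_pow]; simp
        have ch : (((j + M).choose j : ℕ) : ℝ) = (j + M).factorial / (j.factorial * M.factorial) := by
          rw [Nat.cast_add_choose]
        rw [ch]
        have := hb' j
        have := hc' j
        have := hs' j
        have := hs' M
        have := (poch_pos hbj M).ne'
        have := (poch_pos hcj M).ne'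
        field_simp
        linear_combination (poch A j * poch (σ + ↑M) j * poch (σ - C) j * poch (b - A) M * poch (c - A) M) * hr


lemma conv_succ (h f s r : ℕ → ℝ) (hh : ∀ k : ℕ, ((k : ℝ) + 1) * h (k + 1) = s k * h k)
    (hf : ∀ k : ℕ, ((k : ℝ) + 1) * f (k + 1) = r k * f k) (n : ℕ) :
    ((n : ℝ) + 1) * ∑ k ∈ Finset.range (n + 1 + 1), h k * f (n + 1 - k) =
      ∑ k ∈ Finset.range (n + 1), h k * f (n - k) * (s k + r (n - k)) := by
  have h1 : ∑ k ∈ Finset.range (n + 1 + 1), (k : ℝ) * h k * f (n + 1 - k) =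
      ∑ k ∈ Finset.range (n + 1), h k * f (n - k) * s k := by
    rw [Finset.sum_range_succ']
    simp only [Nat.cast_zero, zero_mul, add_zero]
    apply Finset.sum_congr rfl
    intro k hk
    have e : n + 1 - (k + 1) = n - k := by omega
    rw [e]; push_cast
    linear_combination f (n - k) * hh k
  have h2 : ∑ k ∈ Finset.range (n + 1 + 1), ((n : ℝ) + 1 - k) * h k * f (n + 1 - k) =
      ∑ k ∈ Finset.range (n + 1), h k * f (n - k) * r (n - k) := by
    rw [Finset.sum_range_succ]
    have : ((n : ℝ) + 1 - (n + 1 : ℕ)) = 0 := by push_cast; ring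
    rw [this, zero_mul, zero_mul, add_zero]
    apply Finset.sum_congr rfl
    intro k hk
    rw [Finset.mem_range] at hk
    have e : n + 1 - k = n - k + 1 := by omega
    have := hf (n - k)
    rw [Nat.cast_sub (by omega)] at this
    rw [e]
    linear_combination h k * this
  simp only [mul_add]
  rw [Finset.sum_add_distrib, ← h1, ← h2, ← Finset.sum_add_distrib, Finset.mul_sum]
  apply Finset.sum_congr rfl
  intros; ring

noncomputable def hh (σ A B : ℝ) (k : ℕ) : ℝ := poch A k * poch B k / (k.factorial * poch σ k)

lemma hh_succ {σ : ℝ} (hσ : 0 < σ) (A B : ℝ) (k : ℕ) :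
    ((k : ℝ) + 1) * hh σ A B (k + 1) = (A + k) * (B + k) / (σ + k) * hh σ A B k := by
  unfold hh
  have := (poch_pos hσ k).ne'
  have : σ + k ≠ 0 := by positivity
  rw [poch_succ, poch_succ, poch_succ, Nat.factorial_succ]
  push_cast
  field_simp

lemma hh_zero (σ A B : ℝ) : hh σ A B 0 = 1 := by simp [hh]

noncomputable def EE (σ a u v : ℝ) (n : ℕ) : ℝ :=
  ∑ k ∈ Finset.range (n + 1), hh σ a (-1 / 2) k * hh σ u v (n - k)

lemma hh_nonpos {σ a : ℝ} (hσ : 0 < σ) (ha : 0 < a) (k : ℕ) : hh σ a (-1 / 2) (k + 1) < 0 := by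
  unfold hh
  rw [poch_succ_left (-1 / 2)]
  have h1 := poch_pos ha (k + 1)
  have h2 := poch_pos hσ (k + 1)
  have h3 : 0 < poch (-1 / 2 + 1) k := poch_pos (by norm_num) k
  apply div_neg_of_neg_of_pos
  · have := mul_pos h1 h3
    nlinarith
  · positivity

lemma hh_pos {σ a b : ℝ} (hσ : 0 < σ) (ha : 0 < a) (hb : 0 < b) (k : ℕ) : 0 < hh σ a b k := by
  unfold hh
  have h1 := poch_pos ha k
  have h2 := poch_pos hσ k
  have h3 := poch_pos hb k
  positivity

lemma EE_zero (σ a u v : ℝ) : EE σ a u v 0 = 1 := by simp [EE, hh_zero]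

lemma EE_le {σ a u v : ℝ} (hσ : 0 < σ) (ha : 0 < a) (hu : 0 < u) (hv : 0 < v) (n : ℕ) :
    EE σ a u v n ≤ hh σ u v n := by
  unfold EE
  rw [Finset.sum_range_succ', hh_zero]
  have : ∑ k ∈ Finset.range n, hh σ a (-1 / 2) (k + 1) * hh σ u v (n - (k + 1)) ≤ 0 := by
    apply Finset.sum_nonpos
    intro k _
    exact (mul_neg_of_neg_of_pos (hh_nonpos hσ ha k) (hh_pos hσ hu hv _)).le
  simp; linarith

lemma EE_step {σ a u v : ℝ} (hσ : 0 < σ) (huv : u + v = 2 * σ + 1 / 2 - a) (n : ℕ) :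
    ((n : ℝ) + 1) * EE σ a u v (n + 1) = ∑ k ∈ Finset.range (n + 1), hh σ a (-1 / 2) k * hh σ u v (n - k) *
      (n + (σ + 1 / 2) * (σ - a) / (σ + k) + (σ - u) * (σ - v) / (σ + (n - k : ℕ))) := by
  unfold EE
  rw [conv_succ _ _ _ _ (hh_succ hσ a (-1 / 2)) (hh_succ hσ u v)]
  apply Finset.sum_congr rfl
  intro k hk
  congr 1
  obtain ⟨m, rfl⟩ : ∃ m, n = k + m := ⟨n - k, by rw [Finset.mem_range] at hk; omega⟩
  have e : k + m - k = m := by omega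
  rw [e]
  have h1 : σ + k ≠ 0 := by positivity
  have h2 : σ + m ≠ 0 := by positivity
  have hv : v = 2 * σ + 1 / 2 - a - u := by linarith
  subst hv
  push_cast
  field_simp
  ring

lemma EE_one {σ a u v : ℝ} (hσ : 0 < σ) : EE σ a u v 1 = (u * v - a / 2) / σ := by
  unfold EE
  simp [Finset.sum_range_succ, hh, poch_succ]
  field_simp
  ring

lemma EE_ineq {σ a u v : ℝ} (hσ : 0 < σ) (ha : 0 < a) (hu : 0 < u) (hv : 0 < v)
    (huv : u + v = 2 * σ + 1 / 2 - a) (hP : a ≤ σ) (hQ : (σ - u) * (σ - v) ≤ 0) (n : ℕ) :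
    EE σ a u v n * (n + (σ + 1 / 2) * (σ - a) / σ + (σ - u) * (σ - v) / (σ + n)) ≤
      ((n : ℝ) + 1) * EE σ a u v (n + 1) ∧ 
    (a < σ → 1 ≤ n → EE σ a u v n * (n + (σ + 1 / 2) * (σ - a) / σ + (σ - u) * (σ - v) / (σ + n)) <
      ((n : ℝ) + 1) * EE σ a u v (n + 1)) := by
  rw [EE_step hσ huv]
  unfold EE
  rw [Finset.sum_mul]
  have hQ' : ∀ k : ℕ, (σ - u) * (σ - v) / (σ + (n - k : ℕ)) ≤ (σ - u) * (σ - v) / (σ + n) := by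
    intro k
    rw [div_le_div_iff₀ (by positivity) (by positivity)]
    have : ((n - k : ℕ) : ℝ) ≤ n := by exact_mod_cast Nat.sub_le _ _
    exact mul_le_mul_of_nonpos_left (by linarith) hQ
  have hPP : 0 ≤ (σ + 1 / 2) * (σ - a) := mul_nonneg (by linarith) (by linarith)
  have hP' : ∀ k : ℕ, (σ + 1 / 2) * (σ - a) / (σ + k) ≤ (σ + 1 / 2) * (σ - a) / σ := by
    intro k
    apply div_le_div_of_nonneg_left hPP hσ
    have : (0 : ℝ) ≤ k := by positivity
    linarith
  have main : ∀ k ∈ Finset.range (n + 1), hh σ a (-1 / 2) k * hh σ u v (n - k) * 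
      (n + (σ + 1 / 2) * (σ - a) / σ + (σ - u) * (σ - v) / (σ + n)) ≤ 
      hh σ a (-1 / 2) k * hh σ u v (n - k) *
      (n + (σ + 1 / 2) * (σ - a) / (σ + k) + (σ - u) * (σ - v) / (σ + (n - k : ℕ))) := by
    intro k _
    rcases k with _ | k
    · simp
    · apply mul_le_mul_of_nonpos_left
      · have := hP' (k + 1); have := hQ' (k + 1); linarith
      · exact (mul_neg_of_neg_of_pos (hh_nonpos hσ ha k) (hh_pos hσ hu hv _)).le
  refine ⟨Finset.sum_le_sum main, fun h hn => ?_⟩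
  apply Finset.sum_lt_sum main
  refine ⟨1, by simp; omega, ?_⟩
  apply mul_lt_mul_of_neg_left
  · have : (σ + 1 / 2) * (σ - a) / (σ + (1 : ℕ)) < (σ + 1 / 2) * (σ - a) / σ := by
      apply div_lt_div_of_pos_left (mul_pos (by linarith) (by linarith)) hσ
      simp
    have := hQ' 1; linarith
  · exact (mul_neg_of_neg_of_pos (hh_nonpos hσ ha 0) (hh_pos hσ hu hv _))

lemma CC_eq {σ a u v : ℝ} (hσ : 0 < σ) (ha : 0 < a) (hu : 0 < u) (hv : 0 < v)
    (huv : u + v = 2 * σ + 1 / 2 - a) (n : ℕ) :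
    CC σ a (σ + 1 / 2) (u + a) (v + a) n = n.factorial * poch σ n / (poch (u + a) n * poch (v + a) n) * EE σ a u v n := by
  rw [whipple σ a (σ + 1 / 2) (u + a) (v + a) hσ (by linarith) (by linarith) (by linarith)]
  unfold EE hh
  have e : σ - (σ + 1 / 2) = -1 / 2 := by ring
  simp only [e, add_sub_cancel_right]

lemma poch_mul_nonneg {p q : ℝ} (h : 0 ≤ p * q) (hpq : -1 ≤ p + q) (n : ℕ) : 0 ≤ poch p n * poch q n := by
  rcases n with _ | n
  · simp
  rw [poch_succ_left, poch_succ_left]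
  have key : 0 ≤ p + 1 ∧ 0 ≤ q + 1 := by
    rcases nonneg_and_nonneg_or_nonpos_and_nonpos_of_mul_nonneg h with h | h <;> constructor <;> linarith [h.1, h.2]
  have := mul_nonneg h (mul_nonneg (poch_nonneg key.1 n) (poch_nonneg key.2 n))
  nlinarith

lemma CC_main {σ a u v : ℝ} (ha : 0 < a) (hu : 0 < u) (hv : 0 < v)
    (huv : u + v = 2 * σ + 1 / 2 - a) (hP : a ≤ σ) (h1 : a / 2 ≤ u * v) :
    (∀ n, 0 ≤ CC σ a (σ + 1 / 2) (u + a) (v + a) n) ∧ (∀ n, CC σ a (σ + 1 / 2) (u + a) (v + a) n ≤ 1) ∧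
    (¬ (σ = a ∧ u * v = a / 2) → ∃ n, 0 < CC σ a (σ + 1 / 2) (u + a) (v + a) n ∧
      0 < CC σ a (σ + 1 / 2) (u + a) (v + a) (n + 1)) := by
  have hσ : 0 < σ := by linarith
  have hPQ : (σ + 1 / 2) * (σ - a) + (σ - u) * (σ - v) = u * v - a / 2 := by
    linear_combination -σ * huv
  have pos : ∀ n : ℕ, 0 < n.factorial * poch σ n / (poch (u + a) n * poch (v + a) n) := by
    intro n
    have := poch_pos hσ n
    have : 0 < poch (u + a) n := poch_pos (by linarith) n
    have : 0 < poch (v + a) n := poch_pos (by linarith) n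
    positivity
  have ratio : (σ - u) * (σ - v) ≤ 0 → ∀ n : ℕ, (n : ℝ) ≤ n + (σ + 1 / 2) * (σ - a) / σ + (σ - u) * (σ - v) / (σ + n) := by
    intro hQ n
    have : (σ - u) * (σ - v) / σ ≤ (σ - u) * (σ - v) / (σ + n) := by
      rw [div_le_div_iff₀ (by positivity) (by positivity)]
      have : (0 : ℝ) ≤ n := by positivity
      exact mul_le_mul_of_nonpos_left (by linarith) hQ
    have h3 : 0 ≤ (σ + 1 / 2) * (σ - a) / σ + (σ - u) * (σ - v) / σ := by
      rw [← add_div, hPQ]; apply div_nonneg <;> linarith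
    linarith
  have nonneg : ∀ n, 0 ≤ CC σ a (σ + 1 / 2) (u + a) (v + a) n := by
    rcases le_total 0 ((σ - u) * (σ - v)) with hQ | hQ
    · intro n
      rw [CC_comm, whipple σ (σ + 1 / 2) a (u + a) (v + a) hσ (by linarith) (by linarith) (by linarith)]
      apply mul_nonneg (pos n).le
      apply Finset.sum_nonneg
      intro j _
      have e1 : u + a - (σ + 1 / 2) = σ - v := by linarith
      have e2 : v + a - (σ + 1 / 2) = σ - u := by linarith
      rw [e1, e2]
      apply mul_nonneg
      · have := poch_pos hσ j
        have : 0 ≤ poch (σ - a) j := poch_nonneg (by linarith) j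
        have : 0 ≤ poch (σ + 1 / 2) j := poch_nonneg (by linarith) j
        positivity
      · have := poch_pos hσ (n - j)
        apply div_nonneg _ (by positivity)
        apply poch_mul_nonneg
        · linarith
        · linarith
    · intro n
      rw [CC_eq hσ ha hu hv huv]
      apply mul_nonneg (pos n).le
      induction n with
      | zero => simp [EE_zero]
      | succ n ih =>
        have := (EE_ineq hσ ha hu hv huv hP hQ n).1
        have h2 := ratio hQ n
        have h3 : 0 ≤ ((n : ℝ) + 1) * EE σ a u v (n + 1) := le_trans (mul_nonneg ih (le_trans (by positivity) h2)) this
        exact nonneg_of_mul_nonneg_right h3 (by positivity)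
  refine ⟨nonneg, ?_, ?_⟩
  · intro n
    rw [CC_eq hσ ha hu hv huv]
    have h := mul_le_mul_of_nonneg_left (EE_le hσ ha hu hv n) (pos n).le
    refine h.trans ?_
    unfold hh
    have hu1 := poch_pos hu n
    have hv1 := poch_pos hv n
    have := poch_pos hσ n
    have hu2 : poch u n ≤ poch (u + a) n := poch_mono hu.le (by linarith) n
    have hv2 : poch v n ≤ poch (v + a) n := poch_mono hv.le (by linarith) n
    have hu3 := hu1.trans_le hu2
    have hv3 := hv1.trans_le hv2
    have : (n.factorial : ℝ) * poch σ n / (poch (u + a) n * poch (v + a) n) * (poch u n * poch v n / (n.factorial * poch σ n))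
      = (poch u n * poch v n) / (poch (u + a) n * poch (v + a) n) := by field_simp
    rw [this, div_le_one (by positivity)]
    exact mul_le_mul hu2 hv2 hv1.le hu3.le
  · intro hne
    rcases h1.lt_or_eq with h | h
    · refine ⟨0, ?_, ?_⟩
      · rw [CC_eq hσ ha hu hv huv, EE_zero]; exact mul_pos (pos 0) one_pos
      · rw [CC_eq hσ ha hu hv huv, EE_one hσ]; exact mul_pos (pos _) (div_pos (by linarith) hσ)
    · have hP' : a < σ := lt_of_le_of_ne hP (fun h' => hne ⟨h'.symm, h.symm⟩)
      have hQ : (σ - u) * (σ - v) ≤ 0 := by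
        have : 0 ≤ (σ + 1 / 2) * (σ - a) := mul_nonneg (by linarith) (by linarith)
        linarith
      have hE : ∀ n, 0 ≤ EE σ a u v n := by
        intro n
        have := nonneg n
        rw [CC_eq hσ ha hu hv huv] at this
        exact nonneg_of_mul_nonneg_right this (pos n)
      have hS : ∀ n, 1 ≤ n → 0 < EE σ a u v (n + 1) := by
        intro n hn
        have h4 := (EE_ineq hσ ha hu hv huv hP hQ n).2 hP' hn
        have h2 := ratio hQ n
        have h3 : 0 < ((n : ℝ) + 1) * EE σ a u v (n + 1) := lt_of_le_of_lt (mul_nonneg (hE n) (le_trans (by positivity) h2)) h4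
        exact pos_of_mul_pos_right h3 (by positivity)
      refine ⟨2, ?_, ?_⟩ <;> rw [CC_eq hσ ha hu hv huv]
      · exact mul_pos (pos _) (hS 1 le_rfl)
      · exact mul_pos (pos _) (hS 2 (by norm_num))


noncomputable def gq (B : ℝ) : ℕ → ℝ
  | 0 => 1
  | r + 1 => (B + 2 * r + 1) * poch B r

lemma orth_partial {B : ℝ} (hB : 0 < B) (M R s : ℕ) (h : M = R + s) :
    ∑ r ∈ Finset.range (R + 1), (-1 : ℝ) ^ r * gq B r / (r.factorial * (M + 1 - r).factorial * poch B (M + 1 + r)) =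
      (-1) ^ R * poch B R / (R.factorial * s.factorial * poch B (M + 1 + R) * (M + 1)) := by
  have hp := fun n => (poch_pos hB n).ne'
  induction R generalizing s with
  | zero =>
    have : M = s := by omega
    subst this
    have := hp (M + 1)
    simp [gq, Nat.factorial_succ]
    ring
  | succ R ih =>
    rw [Finset.sum_range_succ, ih (s + 1) (by omega)]
    have e : M + 1 - (R + 1) = s + 1 := by omega
    have e2 : M + 1 + (R + 1) = M + 1 + R + 1 := by omega
    rw [e, e2, poch_succ B (M + 1 + R), poch_succ B R, gq]
    have := hp (M + 1 + R)
    have h3 : B + ((M + 1 + R : ℕ) : ℝ) ≠ 0 := by positivity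
    rw [Nat.factorial_succ R, Nat.factorial_succ s, pow_succ]
    have hM : (M : ℝ) = R + 1 + s := by rw [h]; push_cast; ring
    push_cast at h3 ⊢
    rw [hM] at *
    field_simp
    ring

lemma orth {B : ℝ} (hB : 0 < B) (M : ℕ) :
    ∑ r ∈ Finset.range (M + 1), (-1 : ℝ) ^ r * gq B r / (r.factorial * (M - r).factorial * poch B (M + r)) =
      if M = 0 then 1 else 0 := by
  have hp := fun n => (poch_pos hB n).ne'
  rcases M with _ | M
  · simp [gq]
  · rw [Finset.sum_range_succ, orth_partial hB M M 0 (by omega)]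
    have e2 : M + 1 + (M + 1) = M + 1 + M + 1 := by omega
    rw [e2, poch_succ B (M + 1 + M), gq]
    have := hp (M + 1 + M)
    have h3 : B + ((M + 1 + M : ℕ) : ℝ) ≠ 0 := by positivity
    rw [Nat.factorial_succ M, pow_succ]
    simp
    push_cast at h3
    field_simp
    ring

lemma gq_shift (s : ℝ) (k r : ℕ) :
    gq s (k + r) * poch ((k + r : ℕ) + s - 1) k = poch s (2 * k) * gq (s + 2 * k) r := by
  rcases r with _ | r
  · rcases k with _ | k
    · simp [gq]
    · simp only [add_zero, gq]
      rw [poch_succ]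
      have e : 2 * (k + 1) = k + (k + 1) + 1 := by omega
      rw [e, poch_succ, poch_add s k (k+1), poch_succ (s + k)]
      have e2 : (((k + 1 : ℕ) : ℝ) + s - 1) = s + k := by push_cast; ring
      rw [e2]; push_cast; ring
  · rw [← add_assoc, gq, gq]
    have e2 : (((k + r + 1 : ℕ) : ℝ) + s - 1) = s + (k + r : ℕ) := by push_cast; ring
    have h1 := poch_add s (k + r) k
    have h2 := poch_add s (2 * k) r
    have e3 : k + r + k = 2 * k + r := by ring
    rw [e3] at h1
    rw [e2]
    push_cast at *
    linear_combination (s + 2 * (k + r) + 1) * (h2 - h1)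

lemma sum_swap (N : ℕ) (f : ℕ → ℕ → ℝ) :
    ∑ n ∈ Finset.range (N + 1), ∑ k ∈ Finset.range (n + 1), f n k
      = ∑ j ∈ Finset.range (N + 1), ∑ m ∈ Finset.range (N - j + 1), f (j + m) j := by
  rw [Finset.sum_sigma', Finset.sum_sigma']
  apply Finset.sum_bij' (fun x _ => (⟨x.2, x.1 - x.2⟩ : Sigma (fun _ : ℕ => ℕ))) (fun x _ => (⟨x.1 + x.2, x.1⟩ : Sigma (fun _ : ℕ => ℕ)))
  · rintro ⟨k, j⟩ h; simp at h ⊢; omega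
  · rintro ⟨k, j⟩ h; simp at h ⊢; omega
  · rintro ⟨k, j⟩ h; simp at h ⊢; omega
  · rintro ⟨k, j⟩ h; simp at h ⊢
  · rintro ⟨k, j⟩ h; simp at h ⊢; congr 1; omega

lemma inversion {σ : ℝ} (hσ : 0 < σ) (A C b c : ℝ) (N : ℕ) :
    ∑ n ∈ Finset.range (N + 1), (-1 : ℝ) ^ n * gq (2 * σ) n * CC σ A C b c n /
      (n.factorial * (N - n).factorial * poch (2 * σ) (N + n)) =
    poch A N * poch C N / (poch σ N * poch b N * poch c N) / N.factorial := by
  set t : ℕ → ℝ := fun k => poch A k * poch C k / (poch σ k * poch b k * poch c k) with ht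
  have hp := fun n => (poch_pos (show 0 < 2 * σ by linarith) n).ne'
  have e1 : ∀ n ∈ Finset.range (N + 1), (-1 : ℝ) ^ n * gq (2 * σ) n * CC σ A C b c n /
      (n.factorial * (N - n).factorial * poch (2 * σ) (N + n)) = ∑ k ∈ Finset.range (n + 1),
      (-1 : ℝ) ^ n * gq (2 * σ) n /
      (n.factorial * (N - n).factorial * poch (2 * σ) (N + n)) * ((-1 : ℝ) ^ k * (n.choose k : ℝ) * poch (n + 2 * σ - 1) k * t k) := by
    intro n _
    rw [← Finset.mul_sum]
    unfold CC
    ring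
  rw [Finset.sum_congr rfl e1, sum_swap N (fun n k => (-1 : ℝ) ^ n * gq (2 * σ) n /
      (n.factorial * (N - n).factorial * poch (2 * σ) (N + n)) * ((-1 : ℝ) ^ k * (n.choose k : ℝ) * poch (n + 2 * σ - 1) k * t k))]
  have e2 : ∀ k ∈ Finset.range (N + 1), ∑ m ∈ Finset.range (N - k + 1), (-1 : ℝ) ^ (k + m) * gq (2 * σ) (k + m) /
      ((k + m).factorial * (N - (k + m)).factorial * poch (2 * σ) (N + (k + m))) * ((-1 : ℝ) ^ k * ((k + m).choose k : ℝ) * poch ((k + m : ℕ) + 2 * σ - 1) k * t k)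
      = t k / k.factorial * (if N - k = 0 then 1 else 0) := by
    intro k hk
    rw [Finset.mem_range] at hk
    rw [← orth (show 0 < 2 * σ + 2 * k by positivity) (N - k), Finset.mul_sum]
    apply Finset.sum_congr rfl
    intro m hm
    rw [Finset.mem_range] at hm
    have e3 : N - (k + m) = N - k - m := by omega
    have e4 : N + (k + m) = 2 * k + (N - k + m) := by omega
    rw [e3, e4, poch_add (2 * σ) (2 * k), Nat.cast_add_choose, pow_add]
    have h5 := gq_shift (2 * σ) k m
    have hr : ((-1 : ℝ) ^ k) * (-1) ^ k = 1 := by rw [← mul_pow]; simp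
    have h6 := hp (2 * k)
    have h7 := (poch_pos (show 0 < 2 * σ + 2 * k by positivity) (N - k + m)).ne'
    push_cast at h5 ⊢
    generalize poch (2 * σ + 2 * k) (N - k + m) = X at *
    generalize gq (2 * σ + 2 * k) m = G at *
    generalize t k = tk at *
    field_simp
    linear_combination ((-1) ^ k * (-1) ^ k * tk) * h5 + (poch (2 * σ) (2 * k) * G * tk) * hr
  rw [Finset.sum_congr rfl e2, Finset.sum_range_succ, Finset.sum_eq_zero]
  · simp [ht]
  · intro k hk
    rw [Finset.mem_range] at hk
    rw [if_neg (by omega), mul_zero]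

noncomputable def psi (σ : ℝ) (n j : ℕ) : ℝ :=
  poch (σ + n) j / (poch (σ + 1 / 2 + n) j * poch (2 * σ + 2 * n) j * j.factorial)

noncomputable def cn (σ a b c : ℝ) (n : ℕ) : ℝ :=
  gq (2 * σ) n * poch σ n / (n.factorial * poch (σ + 1 / 2) n * poch (2 * σ) (2 * n)) * CC σ a (σ + 1 / 2) b c n

lemma coeff_id {σ : ℝ} (hσ : 0 < σ) (a b c : ℝ) (N : ℕ) :
    ∑ n ∈ Finset.range (N + 1), cn σ a b c n * ((-1) ^ (N - n) * psi σ n (N - n)) =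
      (-1) ^ N * poch a N / (poch b N * poch c N * N.factorial) := by
  have h := inversion hσ a (σ + 1 / 2) b c N
  have h1 := fun n => (poch_pos hσ n).ne'
  have h2 := fun n => (poch_pos (show 0 < σ + 1 / 2 by linarith) n).ne'
  have h3 := fun n => (poch_pos (show 0 < 2 * σ by linarith) n).ne'
  have : (-1) ^ N * poch a N / (poch b N * poch c N * N.factorial) =
    (-1) ^ N * poch σ N / poch (σ + 1 / 2) N * (poch a N * poch (σ + 1 / 2) N / (poch σ N * poch b N * poch c N) / N.factorial) := by
    have := h1 N
    have := h2 N
    generalize poch (σ + 1 / 2) N = X at *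
    field_simp
  rw [this, ← h, Finset.mul_sum]
  apply Finset.sum_congr rfl
  intro n hn
  obtain ⟨j, rfl⟩ : ∃ j, N = n + j := ⟨N - n, by rw [Finset.mem_range] at hn; omega⟩
  have e : n + j - n = j := by omega
  have e2 : n + j + n = 2 * n + j := by omega
  rw [e, e2]
  unfold cn psi
  rw [poch_add σ, poch_add (σ + 1 / 2), poch_add (2 * σ), pow_add]
  have hr : ((-1 : ℝ) ^ n) * (-1) ^ n = 1 := by rw [← mul_pow]; simp
  have a1 := h1 n
  have a2 := h2 n
  have a3 := h3 (2 * n)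
  have a5 := (poch_pos (show 0 < σ + 1 / 2 + n by positivity) j).ne'
  have a6 := (poch_pos (show 0 < 2 * σ + 2 * n by positivity) j).ne'
  push_cast
  generalize CC σ a (σ + 1 / 2) b c n = X0 at *
  generalize poch (σ + 1 / 2) n = X1 at *
  generalize poch (σ + 1 / 2 + n) j = X2 at *
  generalize poch (2 * σ + 2 * n) j = X3 at *
  field_simp
  linear_combination (-gq (2 * σ) n * X0 * poch (σ + n) j) * hr

noncomputable def jj (m w : ℝ) : ℝ := ∑' k : ℕ, (-w) ^ k / (k.factorial * poch m k)

lemma one_le_poch {m : ℝ} (hm : 0 ≤ m) (k : ℕ) : m ^ k ≤ poch m k := by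
  induction k with
  | zero => simp
  | succ k ih =>
    rw [poch_succ, pow_succ]
    have : (0:ℝ) ≤ k := by positivity
    exact mul_le_mul ih (by linarith) hm (poch_nonneg hm k)

lemma jj_bound {m : ℝ} (hm : 0 < m) (w : ℝ) (k : ℕ) : ‖(-w) ^ k / (k.factorial * poch m k)‖ ≤ (|w| / m) ^ k / k.factorial := by
  have := one_le_poch hm.le k
  have hp := poch_pos hm k
  rw [norm_div, norm_mul, norm_pow, norm_neg, Real.norm_eq_abs, Real.norm_of_nonneg hp.le, Real.norm_of_nonneg (by positivity), div_pow, div_div, mul_comm]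
  gcongr

lemma jj_summable_norm {m : ℝ} (hm : 0 < m) (w : ℝ) : Summable fun k : ℕ => ‖(-w) ^ k / (k.factorial * poch m k)‖ :=
  Summable.of_nonneg_of_le (fun _ => norm_nonneg _) (jj_bound hm w) (Real.summable_pow_div_factorial _)

lemma jj_rec {m : ℝ} (hm : 0 < m) (w : ℝ) : jj m w - jj (m + 1) w = -w / (m * (m + 1)) * jj (m + 2) w := by
  unfold jj
  have hm1 : 0 < m + 1 := by linarith
  have hm2 : 0 < m + 2 := by linarith
  have s0 := (jj_summable_norm hm w).of_norm
  have s1 := (jj_summable_norm hm1 w).of_norm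
  rw [← s0.tsum_sub s1, ← tsum_mul_left, (s0.sub s1).tsum_eq_zero_add]
  simp only [poch_zero, pow_zero, sub_self, zero_add]
  congr 1
  ext k
  have p1 : poch m (k + 1) = m * poch (m + 1) k := poch_succ_left m k
  have p2 : poch (m + 1) (k + 1) = (m + 1) * poch (m + 2) k := by
    rw [poch_succ_left]; ring_nf
  have p3 : poch (m + 1) (k + 1) = poch (m + 1) k * (m + 1 + k) := poch_succ _ _
  have p4 : poch (m + 1) k = (m + 1) * poch (m + 2) k / (m + 1 + k) := by
    have : m + 1 + k ≠ 0 := by positivity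
    field_simp; linarith
  rw [p1, p2, p4]
  have := (poch_pos hm2 k).ne'
  have : m + 1 + k ≠ 0 := by positivity
  rw [Nat.factorial_succ, pow_succ]
  push_cast
  field_simp
  ring

lemma jj_no_common {m w : ℝ} (hm : 0 < m) (hw : 0 < w) (h0 : jj m w = 0) (h1 : jj (m + 1) w = 0) : False := by
  have all : ∀ n : ℕ, jj (m + n) w = 0 ∧ jj (m + n + 1) w = 0 := by
    intro n
    induction n with
    | zero => simpa using ⟨h0, h1⟩
    | succ n ih =>
      have hmn : 0 < m + n := by positivity
      have := jj_rec hmn w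
      rw [ih.1, ih.2, sub_self] at this
      have h2 : jj (m + n + 2) w = 0 := by
        rcases mul_eq_zero.mp this.symm with h | h
        · exfalso
          have : -w / ((m + n) * (m + n + 1)) ≠ 0 := div_ne_zero (by linarith) (by positivity)
          exact this h
        · exact h
      push_cast
      refine ⟨by rw [← add_assoc]; exact ih.2, ?_⟩
      rw [← h2]; congr 1; ring
  obtain ⟨n, hn⟩ := exists_nat_gt (4 * w)
  have hmn : 0 < m + n := by positivity
  have hz := (all n).1
  unfold jj at hz
  have s0 := (jj_summable_norm hmn w).of_norm
  rw [s0.tsum_eq_zero_add] at hz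
  have hq : |w| / (m + n) ≤ 1 / 4 := by
    rw [abs_of_pos hw, div_le_div_iff₀ hmn (by norm_num)]; linarith
  have hb : ∀ k : ℕ, ‖(-w) ^ (k + 1) / ((k + 1).factorial * poch (m + n) (k + 1))‖ ≤ 1 / 4 * (1 / 4 : ℝ) ^ k := by
    intro k
    refine (jj_bound hmn w (k + 1)).trans ?_
    rw [← pow_succ']
    have : (1 : ℝ) ≤ (k + 1).factorial := by exact_mod_cast Nat.succ_le_of_lt (Nat.factorial_pos _)
    refine (div_le_self (by positivity) this).trans ?_
    exact pow_le_pow_left₀ (by positivity) hq _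
  have hg : HasSum (fun k : ℕ => 1 / 4 * (1 / 4 : ℝ) ^ k) (1 / 4 * (1 - 1 / 4)⁻¹) :=
    (hasSum_geometric_of_lt_one (by norm_num) (by norm_num)).mul_left _
  have := tsum_of_norm_bounded hg hb
  simp only [pow_zero, Nat.factorial_zero, poch_zero, Nat.cast_one, mul_one, div_one] at hz
  have h5 : ∑' k : ℕ, (-w) ^ (k + 1) / ((k + 1).factorial * poch (m + n) (k + 1)) = -1 := by linarith
  rw [h5] at this
  norm_num at this

lemma vander (x y : ℝ) (n : ℕ) :
    ∑ k ∈ Finset.range (n + 1), poch x k / k.factorial * (poch y (n - k) / (n - k).factorial) = poch (x + y) n / n.factorial := by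
  have hs : ∀ x : ℝ, ∀ k : ℕ, ((k : ℝ) + 1) * (poch x (k + 1) / (k + 1).factorial) = (x + k) * (poch x k / k.factorial) := by
    intro x k
    rw [poch_succ, Nat.factorial_succ]; push_cast; field_simp
  induction n with
  | zero => simp
  | succ n ih =>
    have := conv_succ (fun k => poch x k / k.factorial) (fun k => poch y k / k.factorial) _ _ (hs x) (hs y) n
    have h2 : ∑ k ∈ Finset.range (n + 1), poch x k / k.factorial * (poch y (n - k) / (n - k).factorial) * (x + k + (y + (n - k : ℕ)))
        = (x + y + n) * (poch (x + y) n / n.factorial) := by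
      rw [← ih, Finset.mul_sum]
      apply Finset.sum_congr rfl
      intro k hk
      rw [Finset.mem_range] at hk
      rw [Nat.cast_sub (by omega)]; ring
    rw [h2, ← hs] at this
    exact mul_left_cancel₀ (by positivity) this

lemma poch_double (x : ℝ) (n : ℕ) : poch (2 * x) (2 * n) = 4 ^ n * poch x n * poch (x + 1 / 2) n := by
  induction n with
  | zero => simp
  | succ n ih =>
    have e : 2 * (n + 1) = 2 * n + 1 + 1 := by ring
    rw [e, poch_succ, poch_succ, ih, poch_succ, poch_succ]; push_cast; ring

lemma sq_coeff {m : ℝ} (hm : 1 / 2 < m) (j : ℕ) :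
    ∑ k ∈ Finset.range (j + 1), 1 / (k.factorial * poch m k) * (1 / ((j - k).factorial * poch m (j - k))) =
      4 ^ j * poch (m - 1 / 2) j / (poch m j * poch (2 * m - 1) j * j.factorial) := by
  have hp := fun n => (poch_pos (show 0 < m by linarith) n).ne'
  have hv := vander (1 - m - j) (1 - m - j) j
  have e : 1 - m - j + (1 - m - j) = 1 - (2 * m - 1 + j) - j := by ring
  rw [e, poch_reflect] at hv
  have h1 : ∀ k ∈ Finset.range (j + 1), 1 / (k.factorial * poch m k) * (1 / ((j - k).factorial * poch m (j - k)))
     = (-1) ^ j / (poch m j) ^ 2 * (poch (1 - m - j) k / k.factorial * (poch (1 - m - j) (j - k) / (j - k).factorial)) := by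
    intro k hk
    obtain ⟨l, rfl⟩ : ∃ l, j = k + l := ⟨j - k, by rw [Finset.mem_range] at hk; omega⟩
    have e1 : k + l - k = l := by omega
    have r1 : poch (1 - m - (k + l : ℕ)) k = (-1) ^ k * poch (m + l) k := by
      rw [← poch_reflect]; congr 1; push_cast; ring
    have r2 : poch (1 - m - (k + l : ℕ)) l = (-1) ^ l * poch (m + k) l := by
      rw [← poch_reflect]; congr 1; push_cast; ring
    have q1 : poch m (k + l) = poch m k * poch (m + k) l := poch_add _ _ _
    have q2 : poch m (k + l) = poch m l * poch (m + l) k := by rw [add_comm k l, poch_add]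
    rw [e1, r1, r2]
    have z1 := hp k
    have z2 := hp l
    have z3 := hp (k + l)
    have hr : ((-1 : ℝ) ^ (k + l)) * (-1) ^ (k + l) = 1 := by rw [← mul_pow]; simp
    field_simp
    have : poch m (k + l) ^ 2 = (poch m k * poch (m + k) l) * (poch m l * poch (m + l) k) := by
      rw [sq]; nth_rewrite 1 [q1]; rw [q2]
    rw [this]
    have hr' : ((-1 : ℝ) ^ (k + l)) * ((-1) ^ k * (-1) ^ l) = 1 := by rw [← pow_add]; exact hr
    linear_combination (-(poch m k * poch (m + k) l) * (poch m l * poch (m + l) k)) * hr'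
  rw [Finset.sum_congr rfl h1, ← Finset.mul_sum, hv]
  have hr : ((-1 : ℝ) ^ j) * (-1) ^ j = 1 := by rw [← mul_pow]; simp
  have d := poch_double (m - 1 / 2) j
  have e3 : 2 * (m - 1 / 2) = 2 * m - 1 := by ring
  have e4 : m - 1 / 2 + 1 / 2 = m := by ring
  rw [e3, e4, two_mul j, poch_add] at d
  have h5 := hp j
  have h6 := (poch_pos (show 0 < 2 * m - 1 by linarith) j).ne'
  have d' : poch (2 * m - 1 + j) j = 4 ^ j * poch (m - 1 / 2) j * poch m j / poch (2 * m - 1) j := by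
    rw [eq_div_iff h6]; linarith
  rw [d']
  generalize poch (m - 1 / 2) j = Y
  generalize poch (2 * m - 1) j = Z at *
  field_simp
  linear_combination Y * hr

lemma jj_sq {m : ℝ} (hm : 1 / 2 < m) (y : ℝ) :
    (jj m (y / 4)) ^ 2 = ∑' j : ℕ, (-y) ^ j * (poch (m - 1 / 2) j / (poch m j * poch (2 * m - 1) j * j.factorial)) := by
  have s := jj_summable_norm (show 0 < m by linarith) (y / 4)
  unfold jj
  rw [sq, tsum_mul_tsum_eq_tsum_sum_range_of_summable_norm s s]
  congr 1
  ext j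
  have := sq_coeff hm j
  have h1 : ∀ k ∈ Finset.range (j + 1), (-(y / 4)) ^ k / (k.factorial * poch m k) * ((-(y / 4)) ^ (j - k) / ((j - k).factorial * poch m (j - k)))
      = (-(y / 4)) ^ j * (1 / (k.factorial * poch m k) * (1 / ((j - k).factorial * poch m (j - k)))) := by
    intro k hk
    obtain ⟨l, rfl⟩ : ∃ l, j = k + l := ⟨j - k, by rw [Finset.mem_range] at hk; omega⟩
    have e1 : k + l - k = l := by omega
    rw [e1, pow_add]; ring
  rw [Finset.sum_congr rfl h1, ← Finset.mul_sum, this, ← neg_div, div_pow]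
  field_simp


lemma gq_pos {B : ℝ} (hB : 0 < B) (n : ℕ) : 0 < gq B n := by
  rcases n with _ | n
  · simp [gq]
  · have := poch_pos hB n
    simp only [gq]; positivity

lemma gq_bound {σ : ℝ} (hσ : 0 < σ) (n : ℕ) :
    gq (2 * σ) n ≤ (1 + 1 / (2 * σ)) * poch (2 * σ) (2 * n) := by
  have hs : 0 < 1 / (2 * σ) := by positivity
  rcases n with _ | n
  · simp only [gq, mul_zero, poch_zero]; linarith
  · have e : 2 * (n + 1) = (n + n) + 1 + 1 := by ring
    rw [e, poch_succ_left, poch_succ, poch_add, gq]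
    have h1 : poch (2 * σ) n ≤ poch (2 * σ + 1) n := poch_mono (by linarith) (by linarith) n
    have h2 : 1 ≤ poch (2 * σ + 1 + n) n := by
      have hn : (0:ℝ) ≤ n := by positivity
      refine le_trans ?_ (one_le_poch (by positivity) n)
      exact one_le_pow₀ (by linarith)
    have h3 := poch_pos (show 0 < 2 * σ by linarith) n
    have h4 : poch (2 * σ) n ≤ poch (2 * σ + 1) n * poch (2 * σ + 1 + n) n := by nlinarith
    have h5 : (1 + 1 / (2 * σ)) * (2 * σ * (poch (2 * σ + 1) n * poch (2 * σ + 1 + n) n * (2 * σ + 1 + ((n + n : ℕ) : ℝ)))) 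
      = (2 * σ + 2 * n + 1) * (poch (2 * σ + 1) n * poch (2 * σ + 1 + n) n) * (1 + 2 * σ) := by
      push_cast; field_simp; ring
    rw [h5]
    have h6 : (2 * σ + 2 * n + 1) * poch (2 * σ) n ≤ (2 * σ + 2 * n + 1) * (poch (2 * σ + 1) n * poch (2 * σ + 1 + n) n) :=
      mul_le_mul_of_nonneg_left h4 (by positivity)
    have h7 : 0 ≤ (2 * σ + 2 * n + 1) * poch (2 * σ) n := by positivity
    nlinarith

lemma cn_bound {σ a b c : ℝ} (hσ : 0 < σ) (h0 : ∀ n, 0 ≤ CC σ a (σ + 1 / 2) b c n)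
    (h1 : ∀ n, CC σ a (σ + 1 / 2) b c n ≤ 1) (n : ℕ) :
    0 ≤ cn σ a b c n ∧ cn σ a b c n ≤ (1 + 1 / (2 * σ)) / n.factorial := by
  unfold cn
  have p1 := gq_pos (show 0 < 2 * σ by linarith) n
  have p2 := poch_pos hσ n
  have p3 := poch_pos (show 0 < σ + 1 / 2 by linarith) n
  have p4 := poch_pos (show 0 < 2 * σ by linarith) (2 * n)
  have p5 : poch σ n ≤ poch (σ + 1 / 2) n := poch_mono hσ.le (by linarith) n
  constructor
  · exact mul_nonneg (by positivity) (h0 n)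
  · calc _ ≤ gq (2 * σ) n * poch σ n / (n.factorial * poch (σ + 1 / 2) n * poch (2 * σ) (2 * n)) * 1 := by
          apply mul_le_mul_of_nonneg_left (h1 n) (by positivity)
      _ ≤ _ := by
          rw [mul_one, div_le_div_iff₀ (by positivity) (by positivity)]
          have := mul_le_mul (gq_bound hσ n) p5 p2.le (p1.le.trans (gq_bound hσ n))
          have := mul_le_mul_of_nonneg_right this (show (0:ℝ) ≤ n.factorial by positivity)
          linarith

lemma psi_bound {σ : ℝ} (hσ : 0 < σ) (n j : ℕ) : 0 ≤ psi σ n j ∧ psi σ n j ≤ 2 ^ j / j.factorial := by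
  unfold psi
  have p1 := poch_pos (show 0 < σ + n by positivity) j
  have p2 := poch_pos (show 0 < σ + 1 / 2 + n by positivity) j
  have p3 := poch_pos (show 0 < 2 * σ + 2 * n by positivity) j
  refine ⟨by positivity, ?_⟩
  have hn : (0:ℝ) ≤ n := by positivity
  have q1 : poch (σ + n) j ≤ poch (2 * σ + 2 * n) j := poch_mono (by linarith) (by linarith) j
  have q2 : (1 / 2 : ℝ) ^ j ≤ poch (σ + 1 / 2 + n) j :=
    (one_le_poch (by norm_num) j).trans (poch_mono (by norm_num) (by linarith) j)
  rw [div_le_div_iff₀ (by positivity) (by positivity)]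
  have q3 : 1 ≤ 2 ^ j * poch (σ + 1 / 2 + n) j := by
    calc (1 : ℝ) = 2 ^ j * (1 / 2) ^ j := by rw [← mul_pow]; norm_num
      _ ≤ _ := by gcongr
  have q4 : poch (σ + n) j * 1 ≤ poch (2 * σ + 2 * n) j * (2 ^ j * poch (σ + 1 / 2 + n) j) :=
    mul_le_mul q1 q3 (by norm_num) p3.le
  have := mul_le_mul_of_nonneg_right q4 (show (0:ℝ) ≤ j.factorial by positivity)
  linarith

lemma series_id {σ a b c : ℝ} (hσ : 0 < σ) (h0 : ∀ n, 0 ≤ CC σ a (σ + 1 / 2) b c n)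
    (h1 : ∀ n, CC σ a (σ + 1 / 2) b c n ≤ 1) {y : ℝ} (hy : 0 < y) :
    ∃ S, HasSum (fun N : ℕ => (-y) ^ N * (poch a N / (poch b N * poch c N * N.factorial))) S ∧
      HasSum (fun n : ℕ => cn σ a b c n * y ^ n * (jj (σ + 1 / 2 + n) (y / 4)) ^ 2) S := by
  set F : ℕ × ℕ → ℝ := fun p => cn σ a b c p.1 * y ^ p.1 * ((-y) ^ p.2 * psi σ p.1 p.2) with hF
  have hsum : Summable F := by
    have s1 : Summable (fun n : ℕ => (1 + 1 / (2 * σ)) * (y ^ n / n.factorial)) :=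
      (Real.summable_pow_div_factorial y).mul_left _
    have s2 : Summable (fun j : ℕ => (2 * y) ^ j / j.factorial) := Real.summable_pow_div_factorial _
    refine Summable.of_norm_bounded (s1.mul_of_nonneg s2 (fun n => by positivity) (fun n => by positivity)) ?_
    rintro ⟨n, j⟩
    simp only [hF]
    obtain ⟨c0, c1⟩ := cn_bound hσ h0 h1 n
    obtain ⟨q0, q1⟩ := psi_bound hσ n j
    rw [norm_mul, norm_mul, norm_mul, norm_pow, norm_pow, norm_neg, Real.norm_of_nonneg hy.le, Real.norm_of_nonneg c0,
      Real.norm_of_nonneg q0]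
    calc cn σ a b c n * y ^ n * (y ^ j * psi σ n j) ≤ ((1 + 1 / (2 * σ)) / n.factorial) * y ^ n * (y ^ j * (2 ^ j / j.factorial)) := by
          gcongr
      _ = _ := by rw [mul_pow]; ring
  refine ⟨∑' p, F p, ?_, ?_⟩
  · have h := (Finset.HasAntidiagonal.sigmaAntidiagonalEquivProd (A := ℕ)).hasSum_iff.mpr hsum.hasSum
    have h2 := h.sigma (fun N => hasSum_fintype _)
    convert h2 using 1
    ext N
    rw [show (-y) ^ N * (poch a N / (poch b N * poch c N * N.factorial)) = y ^ N * ((-1) ^ N * poch a N / (poch b N * poch c N * N.factorial)) by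
      rw [neg_pow]; ring]
    rw [← coeff_id hσ a b c N, Finset.mul_sum]
    have := Finset.Nat.sum_antidiagonal_eq_sum_range_succ_mk F N
    have e2 : ∑ p : Finset.HasAntidiagonal.antidiagonal N, F p = ∑ p ∈ Finset.HasAntidiagonal.antidiagonal N, F p :=
      Finset.sum_coe_sort (Finset.HasAntidiagonal.antidiagonal N) F
    trans ∑ p ∈ Finset.HasAntidiagonal.antidiagonal N, F p
    · rw [this]
      apply Finset.sum_congr rfl
      intro n hn
      obtain ⟨j, rfl⟩ : ∃ j, N = n + j := ⟨N - n, by rw [Finset.mem_range] at hn; omega⟩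
      have e : n + j - n = j := by omega
      simp only [hF, e]
      rw [neg_pow y, pow_add]; ring
    · rw [← e2]
      rfl
  · have h2 := hsum.hasSum.prod_fiberwise (fun n => (hsum.prod_factor n).hasSum)
    convert h2 using 1
    ext n
    have hn : (0:ℝ) ≤ n := by positivity
    simp only [hF]
    rw [tsum_mul_left, jj_sq (show 1 / 2 < σ + 1 / 2 + n by linarith)]
    congr 1
    congr 1
    ext j
    unfold psi
    congr 2
    · congr 1; ring
    · congr 2; congr 1; ring

lemma series_main {σ a u v : ℝ} (ha : 0 < a) (hu : 0 < u) (hv : 0 < v)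
    (huv : u + v = 2 * σ + 1 / 2 - a) (hP : a ≤ σ) (h1 : a / 2 ≤ u * v) {y : ℝ} (hy : 0 < y) {S : ℝ}
    (hS : HasSum (fun N : ℕ => (-y) ^ N * (poch a N / (poch (u + a) N * poch (v + a) N * N.factorial))) S) :
    0 ≤ S ∧ (¬ (σ = a ∧ u * v = a / 2) → 0 < S) := by
  obtain ⟨c0, c1, c2⟩ := CC_main ha hu hv huv hP h1
  have hσ : 0 < σ := by linarith
  obtain ⟨S', hS', hT⟩ := series_id hσ c0 c1 hy
  have : S' = S := hS'.unique hS
  subst this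
  have hnn : ∀ n : ℕ, 0 ≤ cn σ a (u + a) (v + a) n * y ^ n * (jj (σ + 1 / 2 + n) (y / 4)) ^ 2 := by
    intro n
    have := (cn_bound hσ c0 c1 n).1
    positivity
  have h0 : 0 ≤ S' := hT.nonneg hnn
  refine ⟨h0, fun hne => ?_⟩
  obtain ⟨n, hn1, hn2⟩ := c2 hne
  rcases h0.lt_or_eq with h | h
  · exact h
  · exfalso
    rw [← h] at hT
    have hz := (hasSum_zero_iff_of_nonneg hnn).mp hT
    have hj : ∀ m, 0 < CC σ a (σ + 1 / 2) (u + a) (v + a) m → jj (σ + 1 / 2 + m) (y / 4) = 0 := by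
      intro m hm
      have hm1 : cn σ a (u + a) (v + a) m * y ^ m * (jj (σ + 1 / 2 + m) (y / 4)) ^ 2 = 0 := congrFun hz m
      have p1 := gq_pos (show 0 < 2 * σ by linarith) m
      have p2 := poch_pos hσ m
      have p3 := poch_pos (show 0 < σ + 1 / 2 by linarith) m
      have p4 := poch_pos (show 0 < 2 * σ by linarith) (2 * m)
      have : 0 < cn σ a (u + a) (v + a) m := by
        unfold cn
        exact mul_pos (by positivity) hm
      have h3 : cn σ a (u + a) (v + a) m * y ^ m ≠ 0 := by positivity
      rcases mul_eq_zero.mp hm1 with h | h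
      · exact absurd h h3
      · exact pow_eq_zero_iff (by norm_num) |>.mp h
    have j1 := hj n hn1
    have j2 := hj (n + 1) hn2
    refine jj_no_common (m := σ + 1 / 2 + n) (by positivity) (show 0 < y / 4 by linarith) j1 ?_
    rw [← j2]; congr 1; push_cast; ring

lemma beta_int {p q : ℝ} (hp : 0 < p) (hq : 0 < q) :
    ∫ y in Set.Ioo (0:ℝ) 1, y ^ (p - 1) * (1 - y) ^ (q - 1) = ProbabilityTheory.beta p q := by
  have hb := ProbabilityTheory.beta_pos hp hq
  have h := ProbabilityTheory.lintegral_betaPDF_eq_one hp hq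
  rw [ProbabilityTheory.lintegral_betaPDF] at h
  have h2 : ∫ y in Set.Ioo (0:ℝ) 1, 1 / ProbabilityTheory.beta p q * y ^ (p - 1) * (1 - y) ^ (q - 1) = 1 := by
    rw [MeasureTheory.integral_eq_lintegral_of_nonneg_ae, h]
    · simp
    · filter_upwards [MeasureTheory.ae_restrict_mem measurableSet_Ioo] with y hy
      have h1 : 0 < y := hy.1
      have h2 : 0 < 1 - y := by linarith [hy.2]
      simp only [Pi.zero_apply]
      positivity
    · exact (by fun_prop : Measurable (fun y : ℝ => 1 / ProbabilityTheory.beta p q * y ^ (p - 1) * (1 - y) ^ (q - 1))).aestronglyMeasurable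
  simp_rw [mul_assoc] at h2
  rw [MeasureTheory.integral_const_mul] at h2
  field_simp at h2
  linarith

lemma beta_x {γ s x : ℝ} (hγ : -1 < γ) (hs : 0 < s) (hx : 0 < x) :
    ∫ t in Set.Ioo (0:ℝ) x, (x ^ 2 - t ^ 2) ^ γ * t ^ (s - 1) =
      x ^ (2 * γ + s) / 2 * ProbabilityTheory.beta (s / 2) (γ + 1) := by
  have him : (fun t : ℝ => (t / x) ^ 2) '' Set.Ioo 0 x = Set.Ioo 0 1 := by
    ext y
    simp only [Set.mem_image, Set.mem_Ioo]
    constructor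
    · rintro ⟨t, ⟨h0, h1⟩, rfl⟩
      have : t / x < 1 := by rw [div_lt_one hx]; exact h1
      have h3 : 0 < t / x := by positivity
      exact ⟨by positivity, by nlinarith⟩
    · rintro ⟨h0, h1⟩
      refine ⟨x * Real.sqrt y, ⟨by positivity, ?_⟩, ?_⟩
      · have : Real.sqrt y < 1 := by rw [Real.sqrt_lt' one_pos]; simpa using h1
        nlinarith
      · rw [mul_div_cancel_left₀ _ hx.ne', Real.sq_sqrt h0.le]
  rw [← beta_int (half_pos hs) (show 0 < γ + 1 by linarith), ← him,
    MeasureTheory.integral_image_eq_integral_abs_deriv_smul (f' := fun t => 2 * t / x ^ 2) measurableSet_Ioo]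
  · rw [← MeasureTheory.integral_const_mul]
    apply MeasureTheory.setIntegral_congr_fun measurableSet_Ioo
    intro t ⟨h0, h1⟩
    have hp : 0 < x ^ 2 - t ^ 2 := by nlinarith
    have e1 : 1 - (t / x) ^ 2 = (x ^ 2 - t ^ 2) / x ^ 2 := by field_simp
    have e2 : ((t / x) ^ 2) ^ (s / 2 - 1) = t ^ (s - 2) / x ^ (s - 2) := by
      rw [← Real.rpow_natCast, ← Real.rpow_mul (by positivity), Real.div_rpow h0.le hx.le]
      push_cast
      congr 2 <;> ring
    have e3 : (x ^ 2) ^ γ = x ^ (2 * γ) := by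
      rw [← Real.rpow_natCast, ← Real.rpow_mul hx.le]; norm_num
    have e4 : t ^ (s - 1) = t ^ (s - 2) * t := by
      nth_rewrite 3 [← Real.rpow_one t]
      rw [← Real.rpow_add h0]; congr 1; ring
    have e5 : x ^ (2 * γ + s) = x ^ (2 * γ) * (x ^ (s - 2) * x ^ 2) := by
      rw [← Real.rpow_natCast x 2, ← Real.rpow_add hx, ← Real.rpow_add hx]; congr 1; push_cast; ring
    simp only [smul_eq_mul]
    rw [abs_of_pos (by positivity), e1, e2, show γ + 1 - 1 = γ by ring, Real.div_rpow hp.le (by positivity), e3, e4, e5]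
    have := Real.rpow_pos_of_pos hx (2 * γ)
    have := Real.rpow_pos_of_pos hx (s - 2)
    field_simp
  · intro t ht
    have := ((hasDerivAt_id t).div_const x).pow 2
    refine (this.congr_deriv ?_).hasDerivWithinAt
    simp; field_simp
  · intro t ht t' ht' h
    simp only at h
    have h1 : 0 ≤ t / x := div_nonneg ht.1.le hx.le
    have h2 : 0 ≤ t' / x := div_nonneg ht'.1.le hx.le
    have := (sq_eq_sq₀ h1 h2).mp h
    field_simp at this
    exact this



lemma Gamma_poch {z : ℝ} (hz : 0 < z) (k : ℕ) : Real.Gamma (z + k) = Real.Gamma z * poch z k := by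
  induction k with
  | zero => simp
  | succ k ih =>
    have : z + (k:ℝ) ≠ 0 := by positivity
    rw [poch_succ, Nat.cast_succ, ← add_assoc, Real.Gamma_add_one this, ih]; ring

lemma pow_le_poch {z : ℝ} (hz : 0 < z) (k : ℕ) : z ^ k ≤ poch z k := by
  induction k with
  | zero => simp
  | succ k ih =>
    rw [poch_succ, pow_succ]
    have : (0:ℝ) ≤ k := by positivity
    exact mul_le_mul ih (by linarith) hz.le (poch_pos hz k).le

lemma integral_series (α β γ : ℝ) (hγ : -1 < γ) (hα : -1 < α) (hβ₂ : β < α + 1) {x : ℝ} (hx : 0 < x)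
    {a u v : ℝ} (ha : a = (α - β + 1) / 2) (hb : u + a = α + 1) (hv : v = γ + 1) :
    ∃ K S : ℝ, 0 < K ∧
      HasSum (fun N : ℕ => (-(x ^ 2 / 4)) ^ N * (poch a N / (poch (u + a) N * poch (v + a) N * N.factorial))) S ∧
      ∫ t in (0 : ℝ)..x, (x ^ 2 - t ^ 2) ^ γ * t ^ (-β) * besselJ α t = K * S := by
  have ha0 : 0 < a := by rw [ha]; linarith
  have hb0 : 0 < u + a := by linarith
  have hv0 : 0 < v := by linarith
  have hc0 : 0 < v + a := by linarith
  set K : ℝ := x ^ (2 * γ + 2 * a) / 2 * (Real.Gamma a * Real.Gamma v / (2 ^ α * Real.Gamma (u + a) * Real.Gamma (v + a))) with hK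
  have hKpos : 0 < K := by
    have := Real.Gamma_pos_of_pos ha0
    have := Real.Gamma_pos_of_pos hb0
    have := Real.Gamma_pos_of_pos hc0
    have := Real.Gamma_pos_of_pos hv0
    positivity
  set G : ℕ → ℝ → ℝ := fun k t => (x ^ 2 - t ^ 2) ^ γ * t ^ ((2 * k + 2 * a : ℝ) - 1) with hG
  set co : ℕ → ℝ := fun k => 1 / ((k.factorial : ℝ) * Real.Gamma (α + k + 1)) / 2 ^ (2 * (k:ℝ) + α) with hco
  have hcopos : ∀ k, 0 < co k := by
    intro k
    have : 0 < Real.Gamma (α + k + 1) := Real.Gamma_pos_of_pos (by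
      have : (0:ℝ) ≤ k := by positivity
      linarith)
    simp only [hco]; positivity
  have hIval : ∀ k : ℕ, ∫ t in Set.Ioo 0 x, G k t = x ^ (2 * γ + (2 * k + 2 * a)) / 2 * ProbabilityTheory.beta ((2 * k + 2 * a) / 2) (γ + 1) := by
    intro k
    exact beta_x hγ (by positivity) hx
  have hval : ∀ k : ℕ, co k * ∫ t in Set.Ioo 0 x, G k t = K * ((x ^ 2 / 4) ^ k * (poch a k / (poch (u + a) k * poch (v + a) k * k.factorial))) := by
    intro k
    rw [hIval]
    simp only [hco, hK, ProbabilityTheory.beta]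
    rw [show α + k + 1 = (u + a) + k by linarith, show (2 * (k:ℝ) + 2 * a) / 2 = a + k by ring,
      show a + (k:ℝ) + (γ + 1) = (v + a) + k by linarith, ← hv, Gamma_poch ha0, Gamma_poch hb0, Gamma_poch hc0,
      show 2 * γ + (2 * k + 2 * a) = (2 * γ + 2 * a) + 2 * k by ring, Real.rpow_add hx,
      Real.rpow_add two_pos, Real.rpow_mul hx.le, Real.rpow_mul two_pos.le, Real.rpow_natCast, Real.rpow_natCast,
      div_pow]
    have e1 : x ^ (2:ℝ) = x ^ 2 := by norm_cast
    have e2 : (2:ℝ) ^ (2:ℝ) = 4 := by rw [show (2:ℝ) ^ (2:ℝ) = (2:ℝ) ^ 2 by norm_cast]; norm_num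
    rw [e1, e2]
    have := Real.Gamma_pos_of_pos ha0
    have := Real.Gamma_pos_of_pos hb0
    have := Real.Gamma_pos_of_pos hc0
    have := poch_pos hb0 k
    have := poch_pos hc0 k
    have : (0:ℝ) < 2 ^ α := by positivity
    field_simp
  have hne : ∀ k : ℕ, ∫ t in Set.Ioo 0 x, G k t ≠ 0 := by
    intro k
    rw [hIval]
    have := ProbabilityTheory.beta_pos (show 0 < (2 * (k:ℝ) + 2 * a) / 2 by positivity) (show 0 < γ + 1 by linarith)
    positivity
  have hintg : ∀ k : ℕ, MeasureTheory.Integrable (fun t => ((-1) ^ k * co k) * G k t) (MeasureTheory.volume.restrict (Set.Ioo 0 x)) :=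
    fun k => (MeasureTheory.Integrable.of_integral_ne_zero (hne k)).const_mul _
  have hnorm : ∀ k : ℕ, ∫ t in Set.Ioo 0 x, ‖((-1) ^ k * co k) * G k t‖ = K * ((x ^ 2 / 4) ^ k * (poch a k / (poch (u + a) k * poch (v + a) k * k.factorial))) := by
    intro k
    rw [← hval, ← MeasureTheory.integral_const_mul]
    apply MeasureTheory.setIntegral_congr_fun measurableSet_Ioo
    intro t ⟨h0, h1⟩
    have hp : 0 < x ^ 2 - t ^ 2 := by nlinarith
    have hg : 0 ≤ G k t := by simp only [hG]; positivity
    simp only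
    rw [norm_mul, norm_mul, norm_pow, norm_neg, norm_one, one_pow, one_mul, Real.norm_of_nonneg hg, Real.norm_of_nonneg (hcopos k).le]
  have hsn : Summable (fun k : ℕ => ∫ t in Set.Ioo 0 x, ‖((-1) ^ k * co k) * G k t‖) := by
    simp_rw [hnorm]
    apply Summable.mul_left
    refine Summable.of_nonneg_of_le (fun k => ?_) (fun k => ?_) (Real.summable_pow_div_factorial (x ^ 2 / 4 / (u + a)))
    · have := poch_pos ha0 k
      have := poch_pos hb0 k
      have := poch_pos hc0 k
      positivity
    · have h1 := poch_pos ha0 k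
      have h2 := poch_pos hb0 k
      have h3 := poch_pos hc0 k
      have h4 := pow_le_poch hb0 k
      have h5 : poch a k ≤ poch (v + a) k := poch_mono ha0.le (by linarith) k
      rw [div_pow (x ^ 2 / 4) (u + a), div_div, div_eq_mul_one_div ((x ^ 2 / 4) ^ k) ((u + a) ^ k * _)]
      refine mul_le_mul_of_nonneg_left ?_ (by positivity)
      calc poch a k / (poch (u + a) k * poch (v + a) k * k.factorial)
          ≤ poch (v + a) k / ((u + a) ^ k * poch (v + a) k * k.factorial) := by gcongr
        _ = _ := by field_simp
  have main := MeasureTheory.hasSum_integral_of_summable_integral_norm hintg hsn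
  refine ⟨K, (∫ t in Set.Ioo 0 x, ∑' k : ℕ, ((-1) ^ k * co k) * G k t) / K, hKpos, ?_, ?_⟩
  · refine Eq.mp (congrArg (fun f => HasSum f _) (funext fun k => ?_)) (main.div_const K)
    rw [MeasureTheory.integral_const_mul, mul_assoc, hval, neg_pow (x ^ 2 / 4)]
    field_simp
  · rw [mul_div_cancel₀ _ hKpos.ne', intervalIntegral.integral_of_le hx.le, MeasureTheory.integral_Ioc_eq_integral_Ioo]
    apply MeasureTheory.setIntegral_congr_fun measurableSet_Ioo
    intro t ⟨h0, h1⟩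
    simp only [besselJ]
    rw [← tsum_mul_left]
    congr 1
    ext k
    simp only [hG, hco]
    rw [Real.div_rpow h0.le two_pos.le, show (2 * (k:ℝ) + 2 * a) - 1 = -β + (2 * k + α) by rw [ha]; ring,
      Real.rpow_add h0 (-β) (2 * (k:ℝ) + α)]
    ring

theorem stmt15 (α β γ : ℝ) (hγ : -1 < γ) (hα : -1 < α)
    (hβ₁ : max (-(γ + 1 / 2)) (-((2 * γ + 1) / (2 * γ + 3)) * (α + 1)) ≤ β)
    (hβ₂ : β < α + 1) :
    (∀ x : ℝ, 0 < x →
        0 ≤ ∫ t in (0 : ℝ)..x, (x ^ 2 - t ^ 2) ^ γ * t ^ (-β) * besselJ α t) ∧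
      (¬((α = γ + 1 / 2 ∧ β = -(γ + 1 / 2)) ∨ (γ = -1 / 2 ∧ β = 0)) →
        ∀ x : ℝ, 0 < x →
          0 < ∫ t in (0 : ℝ)..x, (x ^ 2 - t ^ 2) ^ γ * t ^ (-β) * besselJ α t) := by
  obtain ⟨hA, hB⟩ := max_le_iff.mp hβ₁
  obtain ⟨a, ha⟩ : ∃ a, a = (α - β + 1) / 2 := ⟨_, rfl⟩
  obtain ⟨u, hu⟩ : ∃ u, u = (α + 1 + β) / 2 := ⟨_, rfl⟩
  obtain ⟨v, hv⟩ : ∃ v, v = γ + 1 := ⟨_, rfl⟩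
  obtain ⟨σ, hσ⟩ : ∃ σ, σ = (u + v + a - 1 / 2) / 2 := ⟨_, rfl⟩
  have ha0 : 0 < a := by linarith
  have hv0 : 0 < v := by linarith
  have h1 : a / 2 ≤ u * v := by
    have h3 : 0 < 2 * γ + 3 := by linarith
    have : -((2 * γ + 1) * (α + 1)) ≤ β * (2 * γ + 3) := by
      have := mul_le_mul_of_nonneg_right hB h3.le
      have e : -((2 * γ + 1) / (2 * γ + 3)) * (α + 1) * (2 * γ + 3) = -((2 * γ + 1) * (α + 1)) := by field_simp
      linarith
    subst ha hu hv
    nlinarith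
  have hu0 : 0 < u := by
    by_contra h
    push Not at h
    nlinarith
  have hP : a ≤ σ := by linarith
  have key : ∀ x : ℝ, 0 < x → 0 ≤ (∫ t in (0 : ℝ)..x, (x ^ 2 - t ^ 2) ^ γ * t ^ (-β) * besselJ α t) ∧
      (¬ (σ = a ∧ u * v = a / 2) → 0 < ∫ t in (0 : ℝ)..x, (x ^ 2 - t ^ 2) ^ γ * t ^ (-β) * besselJ α t) := by
    intro x hx
    obtain ⟨K, S, hK, hS, he⟩ := integral_series α β γ hγ hα hβ₂ hx ha (by linarith : u + a = α + 1) hv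
    obtain ⟨m1, m2⟩ := series_main ha0 hu0 hv0 (by linarith) hP h1 (by positivity : 0 < x ^ 2 / 4) hS
    rw [he]
    exact ⟨mul_nonneg hK.le m1, fun h => mul_pos hK (m2 h)⟩
  refine ⟨fun x hx => (key x hx).1, fun hne x hx => (key x hx).2 ?_⟩
  rintro ⟨e1, e2⟩
  apply hne
  have h3 : u = a + 1 / 2 - v := by linarith
  have h4 : (v - a) * (v - 1 / 2) = 0 := by rw [h3] at e2; linarith
  rcases mul_eq_zero.mp h4 with h | h
  · left; constructor <;> linarith
  · right; constructor <;> linarith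
end
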